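/- arXiv:2512.17572 — 2 statements merged into one kernel-verified Lean document; each statement's English description precedes it below -/
import Mathlib

section
/- Let n, r, d be positive integers and T > 0. Let Ā : [0,T] → ℝ^{n×n}, F : [0,T] → ℝ^{r×n}, and C̄ : [0,T] → ℝ^{n×d} be bounded measurable functions, and let σ be an n×n real symmetric positive semidefinite matrix. Then there exists a unique continuous function Φ : [0,T] → ℝ^{n×n} satisfying the integral equation Φ(t) = σ + ∫₀ᵗ [Ā(s)Φ(s) + Φ(s)Ā(s)ᵀ + C̄(s)C̄(s)ᵀ − Φ(s)F(s)ᵀF(s)Φ(s)] ds for all t ∈ [0,T]; moreover, Φ(t) is symmetric positive semidefinite for every t ∈ [0,T]. -/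
open Matrix MeasureTheory intervalIntegral

/-- `Φ` is a continuous solution on `[0,T]` of the matrix integral equation
`Φ(t) = σ + ∫₀ᵗ [Ā(s)Φ(s) + Φ(s)Ā(s)ᵀ + C̄(s)C̄(s)ᵀ − Φ(s)F(s)ᵀF(s)Φ(s)] ds`. -/
def RiccatiIntSol (n r d : ℕ) (T : ℝ)
    (Abar : ℝ → Matrix (Fin n) (Fin n) ℝ)
    (F : ℝ → Matrix (Fin r) (Fin n) ℝ)
    (Cbar : ℝ → Matrix (Fin n) (Fin d) ℝ)
    (σ : Matrix (Fin n) (Fin n) ℝ)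
    (Φ : ℝ → Matrix (Fin n) (Fin n) ℝ) : Prop :=
  (∀ i j, ContinuousOn (fun t => Φ t i j) (Set.Icc (0 : ℝ) T)) ∧
    ∀ t ∈ Set.Icc (0 : ℝ) T, ∀ i j,
      Φ t i j = σ i j + ∫ s in (0 : ℝ)..t,
        (Abar s * Φ s + Φ s * (Abar s)ᵀ + Cbar s * (Cbar s)ᵀ
          - Φ s * (F s)ᵀ * F s * Φ s) i j

/-!
The linear Hamiltonian system `U' = -AᵀU + SV`, `V' = QU + AV` with `U(0) = 1`, `V(0) = σ`,
`Q = C̄C̄ᵀ`, `S = FᵀF` linearises the Riccati equation: `Φ = VU⁻¹` solves it wherever `U` is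
invertible. The energy identity `(UᵀV)' = VᵀSV + UᵀQU` makes `UᵀV` positive semidefinite, and if
`U(t)x = 0` it forces `SVx = 0` almost everywhere on `[0, t]`; then `Ux` solves the homogeneous
equation `u' = -Aᵀu` there, so that `x = 0`. Hence `U` is invertible throughout and
`Φ = (U⁻¹)ᵀ(UᵀV)U⁻¹` is positive semidefinite. If `Ψ` is another solution, `V - ΨU` solves a
homogeneous linear equation with zero initial value, and `Ψ = VU⁻¹`. Linear equations with
integrable coefficients are solved by the Dyson series, whose factorial bounds also give uniqueness.
-/

section Calculus

open Set Filter Topology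

variable {X E F G : Type*} [PseudoMetricSpace X]
  [NormedAddCommGroup E] [NormedSpace ℝ E] [NormedAddCommGroup F] [NormedSpace ℝ F]
  [NormedAddCommGroup G] [NormedSpace ℝ G]

theorem absolutelyContinuousOnInterval_of_dist_le {Y : Type*} [PseudoMetricSpace Y]
    {f : ℝ → X} {g : ℝ → Y} {a b K : ℝ} (hg : AbsolutelyContinuousOnInterval g a b)
    (hfg : ∀ x ∈ uIcc a b, ∀ y ∈ uIcc a b, dist (f x) (f y) ≤ K * dist (g x) (g y)) :
    AbsolutelyContinuousOnInterval f a b := by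
  refine squeeze_zero' (.of_forall fun _ => Finset.sum_nonneg fun _ _ => dist_nonneg) ?_
    (by simpa using Tendsto.const_mul K hg)
  filter_upwards [inf_le_right (α := Filter _) (mem_principal_self _)] with I hI
  rw [Finset.mul_sum]
  exact Finset.sum_le_sum fun i hi => hfg _ (hI.1 i hi).1 _ (hI.1 i hi).2

theorem absolutelyContinuousOnInterval_prodMk {Y : Type*} [PseudoMetricSpace Y]
    {f : ℝ → X} {g : ℝ → Y} {a b : ℝ} (hf : AbsolutelyContinuousOnInterval f a b)
    (hg : AbsolutelyContinuousOnInterval g a b) :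
    AbsolutelyContinuousOnInterval (fun x => (f x, g x)) a b := by
  refine squeeze_zero (fun _ => Finset.sum_nonneg fun _ _ => dist_nonneg) (fun I => ?_)
    (by simpa using Tendsto.add hf hg)
  rw [← Finset.sum_add_distrib]
  exact Finset.sum_le_sum fun i _ => max_le_add_of_nonneg dist_nonneg dist_nonneg

theorem absolutelyContinuousOnInterval_bilin (B : E →L[ℝ] F →L[ℝ] G) {f : ℝ → E} {g : ℝ → F}
    {a b : ℝ} (hf : AbsolutelyContinuousOnInterval f a b)
    (hg : AbsolutelyContinuousOnInterval g a b) :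
    AbsolutelyContinuousOnInterval (fun x => B (f x) (g x)) a b := by
  obtain ⟨C, hC⟩ := hf.exists_bound
  obtain ⟨D, hD⟩ := hg.exists_bound
  refine absolutelyContinuousOnInterval_of_dist_le (K := ‖B‖ * D + ‖B‖ * C)
    (absolutelyContinuousOnInterval_prodMk hf hg) fun x hx y hy => ?_
  have hf_le : ‖f x - f y‖ ≤ dist (f x, g x) (f y, g y) :=
    (dist_eq_norm (f x) (f y)).symm.trans_le (le_max_left _ _)
  have hg_le : ‖g x - g y‖ ≤ dist (f x, g x) (f y, g y) :=
    (dist_eq_norm (g x) (g y)).symm.trans_le (le_max_right _ _)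
  have hC₀ : 0 ≤ C := (norm_nonneg _).trans (hC y hy)
  calc dist (B (f x) (g x)) (B (f y) (g y))
      = ‖B (f x - f y) (g x) + B (f y) (g x - g y)‖ := by
        rw [dist_eq_norm, map_sub, map_sub, _root_.sub_apply, sub_add_sub_cancel]
    _ ≤ ‖B‖ * ‖f x - f y‖ * ‖g x‖ + ‖B‖ * ‖f y‖ * ‖g x - g y‖ :=
        norm_add_le_of_le (B.le_opNorm₂ _ _) (B.le_opNorm₂ _ _)
    _ ≤ ‖B‖ * dist (f x, g x) (f y, g y) * D + ‖B‖ * C * dist (f x, g x) (f y, g y) := by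
        gcongr
        exacts [hD x hx, hC y hy]
    _ = (‖B‖ * D + ‖B‖ * C) * dist (f x, g x) (f y, g y) := by ring

theorem absolutelyContinuousOnInterval_intervalIntegral {g : ℝ → E} {a b : ℝ}
    (hg : IntervalIntegrable g volume a b) :
    AbsolutelyContinuousOnInterval (fun x => ∫ s in a..x, g s) a b := by
  refine absolutelyContinuousOnInterval_of_dist_le (K := 1)
    (hg.norm.absolutelyContinuousOnInterval_intervalIntegral left_mem_uIcc) fun x hx y hy => ?_
  have hint : ∀ z ∈ uIcc a b, IntervalIntegrable g volume a z := fun z hz =>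
    hg.mono_set (uIcc_subset_uIcc_left hz)
  rw [one_mul, dist_eq_norm, Real.dist_eq, integral_interval_sub_left (hint x hx) (hint y hy),
    integral_interval_sub_left (hint x hx).norm (hint y hy).norm]
  exact norm_integral_le_abs_integral_norm

theorem intervalIntegral_eq_sub_of_absolutelyContinuousOnInterval {f g : ℝ → E} {a b : ℝ}
    [CompleteSpace E] (hf : AbsolutelyContinuousOnInterval f a b)
    (hg : IntervalIntegrable g volume a b)
    (hfg : ∀ᵐ x, x ∈ uIcc a b → HasDerivAt f (g x) x) : ∫ s in a..b, g s = f b - f a := by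
  have hderiv : ∀ᵐ x, x ∈ uIcc a b → HasDerivAt (fun x => f x - ∫ s in a..x, g s) 0 x := by
    filter_upwards [hfg, hg.ae_hasDerivAt_integral] with x hfx hgx hx
    simpa using (hfx hx).fun_sub (hgx hx a left_mem_uIcc)
  obtain ⟨C, hC⟩ := (hf.fun_sub
    (absolutelyContinuousOnInterval_intervalIntegral hg)).const_of_ae_hasDerivAt_zero hderiv
  have ha : f a = C := by simpa using hC a left_mem_uIcc
  rw [ha, ← hC b right_mem_uIcc, sub_sub_cancel]

theorem integrableOn_bilin_of_continuousOn (B : E →L[ℝ] F →L[ℝ] G) {f : ℝ → E} {g : ℝ → F}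
    {K : Set ℝ} (hK : IsCompact K) (hf : ContinuousOn f K) (hg : IntegrableOn g K) :
    IntegrableOn (fun s => B (f s) (g s)) K := by
  obtain ⟨C, hC⟩ := hK.exists_bound_of_continuousOn hf
  exact B.integrable_of_bilin_of_bdd_left C
    (hf.aestronglyMeasurable_of_isCompact hK hK.measurableSet)
    ((ae_restrict_iff' hK.measurableSet).2 (ae_of_all _ hC)) hg

/-- `f` is the Carathéodory primitive of `g` on `[a, b]` with initial value `c`; that is, `f` solves
`f' = g`, `f a = c` in the integrated sense, with an integrable right-hand side. Differential
equations `f' = H(·, f)` are encoded by letting `g` depend on `f`. -/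
structure IsLebesguePrimitive (a b : ℝ) (c : E) (f g : ℝ → E) : Prop where
  integrableOn : IntegrableOn g (Icc a b)
  eq_add_integral : ∀ t ∈ Icc a b, f t = c + ∫ s in a..t, g s

theorem isLebesguePrimitive_intervalIntegral {g : ℝ → E} (hg : IntegrableOn g (Icc a b)) :
    IsLebesguePrimitive a b 0 (fun t => ∫ s in a..t, g s) g where
  integrableOn := hg
  eq_add_integral _ _ := (zero_add _).symm

namespace IsLebesguePrimitive

variable {a b t : ℝ} {c c' : E} {d : F} {f g f' g' : ℝ → E} {h k : ℝ → F}

theorem intervalIntegrable (hf : IsLebesguePrimitive a b c f g) (ht : t ∈ Icc a b) :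
    IntervalIntegrable g volume a t := by
  rw [intervalIntegrable_iff_integrableOn_Icc_of_le ht.1]
  exact hf.integrableOn.mono_set (Icc_subset_Icc_right ht.2)

theorem continuousOn (hf : IsLebesguePrimitive a b c f g) : ContinuousOn f (Icc a b) := by
  refine ((continuousOn_const (c := c)).add
    (continuousOn_primitive hf.integrableOn)).congr fun t ht => ?_
  rw [hf.eq_add_integral t ht, integral_of_le ht.1, Pi.add_apply]

theorem congr (hf : IsLebesguePrimitive a b c f g) (hff' : EqOn f f' (Icc a b))
    (hgg' : EqOn g g' (Icc a b)) : IsLebesguePrimitive a b c f' g' where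
  integrableOn := hf.integrableOn.congr_fun hgg' measurableSet_Icc
  eq_add_integral t ht := by
    have hgg't : EqOn g g' (uIcc a t) := by
      rw [uIcc_of_le ht.1]
      exact hgg'.mono (Icc_subset_Icc_right ht.2)
    rw [← hff' ht, hf.eq_add_integral t ht, integral_congr hgg't]

theorem sub (hf : IsLebesguePrimitive a b c f g) (hf' : IsLebesguePrimitive a b c' f' g') :
    IsLebesguePrimitive a b (c - c') (fun s => f s - f' s) (fun s => g s - g' s) where
  integrableOn := hf.integrableOn.sub hf'.integrableOn
  eq_add_integral t ht := by
    rw [integral_sub (hf.intervalIntegrable ht) (hf'.intervalIntegrable ht),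
      hf.eq_add_integral t ht, hf'.eq_add_integral t ht, add_sub_add_comm]

theorem clm_apply [CompleteSpace E] [CompleteSpace F] (φ : E →L[ℝ] F)
    (hf : IsLebesguePrimitive a b c f g) :
    IsLebesguePrimitive a b (φ c) (fun s => φ (f s)) (fun s => φ (g s)) where
  integrableOn := φ.integrable_comp hf.integrableOn
  eq_add_integral t ht := by
    rw [φ.intervalIntegral_comp_comm (hf.intervalIntegrable ht), hf.eq_add_integral t ht, map_add]

theorem linearMap_apply [FiniteDimensional ℝ E] [CompleteSpace F] (φ : E →ₗ[ℝ] F)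
    (hf : IsLebesguePrimitive a b c f g) :
    IsLebesguePrimitive a b (φ c) (fun s => φ (f s)) (fun s => φ (g s)) :=
  have := FiniteDimensional.complete ℝ E
  hf.clm_apply φ.toContinuousLinearMap

theorem eq_of_ae_eq_zero (hf : IsLebesguePrimitive a b c f g) (ht : t ∈ Icc a b)
    (hg : ∀ᵐ s, s ∈ Ioc a t → g s = 0) : f t = c := by
  have hint : ∫ s in a..t, g s = 0 :=
    integral_zero_ae (by rwa [uIoc_of_le ht.1])
  rw [hf.eq_add_integral t ht, hint, add_zero]

theorem eq_of_eq_zero (hf : IsLebesguePrimitive a b c f g) (hg : ∀ s ∈ Icc a b, g s = 0)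
    (ht : t ∈ Icc a b) : f t = c :=
  hf.eq_of_ae_eq_zero ht (ae_of_all _ fun s hs => hg s ⟨hs.1.le, hs.2.trans ht.2⟩)

theorem eq_initial (hf : IsLebesguePrimitive a b c f g) (hab : a ≤ b) : f a = c := by
  rw [hf.eq_add_integral a ⟨le_rfl, hab⟩, integral_same, add_zero]

theorem bilin [CompleteSpace E] [CompleteSpace F] [CompleteSpace G] (B : E →L[ℝ] F →L[ℝ] G)
    (hf : IsLebesguePrimitive a b c f g) (hh : IsLebesguePrimitive a b d h k) :
    IsLebesguePrimitive a b (B c d) (fun s => B (f s) (h s))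
      (fun s => B (g s) (h s) + B (f s) (k s)) := by
  have hint : IntegrableOn (fun s => B (g s) (h s) + B (f s) (k s)) (Icc a b) :=
    (integrableOn_bilin_of_continuousOn B.flip isCompact_Icc hh.continuousOn hf.integrableOn).add
      (integrableOn_bilin_of_continuousOn B isCompact_Icc hf.continuousOn hh.integrableOn)
  refine ⟨hint, fun t ht => ?_⟩
  have htsub : uIcc a t ⊆ Icc a b := by
    rw [uIcc_of_le ht.1]
    exact Icc_subset_Icc_right ht.2
  have hfint := hf.intervalIntegrable ht
  have hhint := hh.intervalIntegrable ht
  have hac : AbsolutelyContinuousOnInterval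
      (fun x => B (c + ∫ s in a..x, g s) (d + ∫ s in a..x, k s)) a t :=
    absolutelyContinuousOnInterval_bilin B
      (absolutelyContinuousOnInterval_of_dist_le (K := 1)
        (absolutelyContinuousOnInterval_intervalIntegral hfint) (by simp))
      (absolutelyContinuousOnInterval_of_dist_le (K := 1)
        (absolutelyContinuousOnInterval_intervalIntegral hhint) (by simp))
  have hderiv : ∀ᵐ x, x ∈ uIcc a t →
      HasDerivAt (fun x => B (c + ∫ s in a..x, g s) (d + ∫ s in a..x, k s))
        (B (g x) (h x) + B (f x) (k x)) x := by
    filter_upwards [hfint.ae_hasDerivAt_integral, hhint.ae_hasDerivAt_integral] with x hgx hkx hx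
    rw [hf.eq_add_integral x (htsub hx), hh.eq_add_integral x (htsub hx), add_comm]
    exact B.hasDerivAt_of_bilinear (fun _ => (hgx hx a left_mem_uIcc).const_add c)
      (fun _ => (hkx hx a left_mem_uIcc).const_add d)
  rw [intervalIntegral_eq_sub_of_absolutelyContinuousOnInterval hac
    ((intervalIntegrable_iff_integrableOn_Icc_of_le ht.1).2
      (hint.mono_set (Icc_subset_Icc_right ht.2))) hderiv,
    hf.eq_add_integral t ht, hh.eq_add_integral t ht]
  simp

theorem pow {f g : ℝ → ℝ} {c : ℝ} (hf : IsLebesguePrimitive a b c f g) (n : ℕ) :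
    IsLebesguePrimitive a b (c ^ (n + 1)) (fun s => f s ^ (n + 1))
      (fun s => (n + 1) * (g s * f s ^ n)) := by
  induction n with
  | zero => simpa using hf
  | succ n ih =>
    refine (ih.bilin (ContinuousLinearMap.mul ℝ ℝ) hf).congr (fun s _ => ?_) fun s _ => ?_
    · simp only [ContinuousLinearMap.mul_apply', ← pow_succ]
    · simp only [ContinuousLinearMap.mul_apply']
      push_cast
      ring

end IsLebesguePrimitive

end Calculus

section LinearEquation

open Set Filter Topology Nat

variable {E F : Type*} [NormedAddCommGroup E] [NormedSpace ℝ E]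
  [NormedAddCommGroup F] [NormedSpace ℝ F] {a b t : ℝ}

theorem integral_mul_integral_pow {ℓ : ℝ → ℝ} (hℓ : IntegrableOn ℓ (Icc a b)) (ht : t ∈ Icc a b)
    (k : ℕ) :
    ∫ s in a..t, ℓ s * (∫ u in a..s, ℓ u) ^ k = (∫ s in a..t, ℓ s) ^ (k + 1) / (k + 1) := by
  have h := ((isLebesguePrimitive_intervalIntegral hℓ).pow k).eq_add_integral t ht
  rw [intervalIntegral.integral_const_mul, zero_pow k.succ_ne_zero, zero_add] at h
  rw [h, mul_div_cancel_left₀ _ k.cast_add_one_ne_zero]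

theorem norm_le_mul_integral_pow_div_factorial (B : F →L[ℝ] E →L[ℝ] E) {L : ℝ → F}
    (hL : IntegrableOn L (Icc a b)) {x : ℕ → ℝ → E} {M : ℝ} (hx₀ : ∀ t ∈ Icc a b, ‖x 0 t‖ ≤ M)
    (hx : ∀ k, ∀ t ∈ Icc a b, x (k + 1) t = ∫ s in a..t, B (L s) (x k s)) (k : ℕ) :
    ∀ t ∈ Icc a b, ‖x k t‖ ≤ M * ((∫ s in a..t, ‖B‖ * ‖L s‖) ^ k / k !) := by
  have hℓ : IntegrableOn (fun s => ‖B‖ * ‖L s‖) (Icc a b) := hL.norm.const_mul _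
  induction k with
  | zero => simpa using hx₀
  | succ k ih =>
    intro t ht
    have hbound : ∀ s ∈ Icc a t, ‖B (L s) (x k s)‖ ≤
        M / k ! * (‖B‖ * ‖L s‖ * (∫ u in a..s, ‖B‖ * ‖L u‖) ^ k) := fun s hs =>
      calc ‖B (L s) (x k s)‖ ≤ ‖B‖ * ‖L s‖ * ‖x k s‖ := B.le_opNorm₂ _ _
        _ ≤ ‖B‖ * ‖L s‖ * (M * ((∫ u in a..s, ‖B‖ * ‖L u‖) ^ k / k !)) := by
          gcongr
          exact ih s ⟨hs.1, hs.2.trans ht.2⟩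
        _ = M / k ! * (‖B‖ * ‖L s‖ * (∫ u in a..s, ‖B‖ * ‖L u‖) ^ k) := by ring
    have hint : IntervalIntegrable
        (fun s => ‖B‖ * ‖L s‖ * (∫ u in a..s, ‖B‖ * ‖L u‖) ^ k) volume a t := by
      rw [intervalIntegrable_iff_integrableOn_Icc_of_le ht.1]
      exact (hℓ.mul_continuousOn ((isLebesguePrimitive_intervalIntegral hℓ).continuousOn.pow k)
        isCompact_Icc).mono_set (Icc_subset_Icc_right ht.2)
    calc ‖x (k + 1) t‖
        ≤ ∫ s in a..t, M / k ! * (‖B‖ * ‖L s‖ * (∫ u in a..s, ‖B‖ * ‖L u‖) ^ k) := by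
          rw [hx k t ht]
          exact norm_integral_le_of_norm_le ht.1
            (ae_of_all _ fun s hs => hbound s (Ioc_subset_Icc_self hs)) (hint.const_mul _)
      _ = M * ((∫ s in a..t, ‖B‖ * ‖L s‖) ^ (k + 1) / (k + 1)!) := by
          rw [intervalIntegral.integral_const_mul, integral_mul_integral_pow hℓ ht, factorial_succ]
          push_cast
          field_simp

theorem IsLebesguePrimitive.eq_zero_of_linear (B : F →L[ℝ] E →L[ℝ] E) {L : ℝ → F}
    (hL : IntegrableOn L (Icc a b)) {x : ℝ → E}
    (hx : IsLebesguePrimitive a b 0 x fun s => B (L s) (x s)) (ht : t ∈ Icc a b) : x t = 0 := by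
  obtain ⟨M, hM⟩ := isCompact_Icc.exists_bound_of_continuousOn hx.continuousOn
  have hbound : ∀ k : ℕ, ‖x t‖ ≤ M * ((∫ s in a..t, ‖B‖ * ‖L s‖) ^ k / k !) := fun k =>
    norm_le_mul_integral_pow_div_factorial B hL (x := fun _ => x) hM
      (fun _ u hu => (hx.eq_add_integral u hu).trans (zero_add _)) k t ht
  have hlim := (FloorSemiring.tendsto_pow_div_factorial_atTop
    (∫ s in a..t, ‖B‖ * ‖L s‖)).const_mul M
  rw [mul_zero] at hlim
  exact norm_le_zero_iff.1 (ge_of_tendsto' hlim hbound)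

/-- The `k`-th term of the Dyson (Peano–Baker) series of `x' = B (L s) x`, `x a = x₀`: the sum of
the first `k + 1` terms is the `k`-th Picard iterate. -/
noncomputable def dysonTerm (B : F →L[ℝ] E →L[ℝ] E) (L : ℝ → F) (a : ℝ) (x₀ : E) : ℕ → ℝ → E
  | 0, _ => x₀
  | k + 1, t => ∫ s in a..t, B (L s) (dysonTerm B L a x₀ k s)

variable (B : F →L[ℝ] E →L[ℝ] E) {L : ℝ → F} (x₀ : E)

theorem continuousOn_dysonTerm (hL : IntegrableOn L (Icc a b)) (k : ℕ) :
    ContinuousOn (dysonTerm B L a x₀ k) (Icc a b) := by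
  induction k with
  | zero => exact continuousOn_const
  | succ k ih =>
    exact (isLebesguePrimitive_intervalIntegral
      (integrableOn_bilin_of_continuousOn B.flip isCompact_Icc ih hL)).continuousOn

theorem norm_dysonTerm_le (hL : IntegrableOn L (Icc a b)) (k : ℕ) (ht : t ∈ Icc a b) :
    ‖dysonTerm B L a x₀ k t‖ ≤ ‖x₀‖ * ((∫ s in a..b, ‖B‖ * ‖L s‖) ^ k / k !) := by
  have hℓ_nonneg : ∀ s, 0 ≤ ‖B‖ * ‖L s‖ := fun s => by positivity
  have hℓ_int : IntervalIntegrable (fun s => ‖B‖ * ‖L s‖) volume a b :=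
    (intervalIntegrable_iff_integrableOn_Icc_of_le (ht.1.trans ht.2)).2 (hL.norm.const_mul _)
  have hmono : ∫ s in a..t, ‖B‖ * ‖L s‖ ≤ ∫ s in a..b, ‖B‖ * ‖L s‖ :=
    integral_mono_interval le_rfl ht.1 ht.2 (ae_of_all _ hℓ_nonneg) hℓ_int
  refine (norm_le_mul_integral_pow_div_factorial B hL (x := dysonTerm B L a x₀)
    (M := ‖x₀‖) (fun _ _ => le_rfl) (fun _ _ _ => rfl) k t ht).trans ?_
  have hΛ_nonneg : 0 ≤ ∫ s in a..t, ‖B‖ * ‖L s‖ := integral_nonneg ht.1 fun s _ => hℓ_nonneg s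
  gcongr

variable [CompleteSpace E]

theorem hasSum_integral_dysonTerm (hL : IntegrableOn L (Icc a b)) (ht : t ∈ Icc a b) :
    HasSum (fun k => dysonTerm B L a x₀ (k + 1) t)
      (∫ s in a..t, B (L s) (∑' k, dysonTerm B L a x₀ k s)) := by
  set m : ℕ → ℝ := fun k => ‖x₀‖ * ((∫ s in a..b, ‖B‖ * ‖L s‖) ^ k / k !)
  have hm : Summable m := (Real.summable_pow_div_factorial _).mul_left _
  have hsub : uIoc a t ⊆ Icc a b := by
    rw [uIoc_of_le ht.1]
    exact fun s hs => ⟨hs.1.le, hs.2.trans ht.2⟩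
  refine hasSum_integral_of_dominated_convergence (fun k s => ‖B‖ * ‖L s‖ * m k)
    (fun k => ?_) (fun k => ae_of_all _ fun s hs => ?_) (ae_of_all _ fun s _ => hm.mul_left _)
    ?_ (ae_of_all _ fun s hs => ?_)
  · exact (integrableOn_bilin_of_continuousOn B.flip isCompact_Icc
      (continuousOn_dysonTerm B x₀ hL k) hL).aestronglyMeasurable.mono_set hsub
  · exact (B.le_opNorm₂ _ _).trans
      (mul_le_mul_of_nonneg_left (norm_dysonTerm_le B x₀ hL k (hsub hs)) (by positivity))
  · simp only [tsum_mul_left]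
    exact intervalIntegrable_iff.2 ((hL.mono_set hsub).norm.const_mul _ |>.mul_const _)
  · exact (B (L s)).hasSum (hm.of_norm_bounded fun k =>
      norm_dysonTerm_le B x₀ hL k (hsub hs)).hasSum

theorem exists_isLebesguePrimitive_linear (hL : IntegrableOn L (Icc a b)) :
    ∃ x : ℝ → E, IsLebesguePrimitive a b x₀ x fun s => B (L s) (x s) := by
  have hcont : ContinuousOn (fun t => ∑' k, dysonTerm B L a x₀ k t) (Icc a b) :=
    continuousOn_tsum (continuousOn_dysonTerm B x₀ hL)
      ((Real.summable_pow_div_factorial (∫ s in a..b, ‖B‖ * ‖L s‖)).mul_left ‖x₀‖)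
      fun k _ ht => norm_dysonTerm_le B x₀ hL k ht
  refine ⟨fun t => ∑' k, dysonTerm B L a x₀ k t,
    integrableOn_bilin_of_continuousOn B.flip isCompact_Icc hcont hL, fun t ht => ?_⟩
  exact ((hasSum_integral_dysonTerm B x₀ hL ht).zero_add (f := (dysonTerm B L a x₀ · t))).tsum_eq

end LinearEquation

section Inverse

open Set

variable {R : Type*} [NormedRing R] [NormedAlgebra ℝ R] [CompleteSpace R] {a b : ℝ} {c : R}
  {f g : ℝ → R}

theorem IsLebesguePrimitive.mul {c' : R} {f' g' : ℝ → R} (hf : IsLebesguePrimitive a b c f g)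
    (hf' : IsLebesguePrimitive a b c' f' g') :
    IsLebesguePrimitive a b (c * c') (fun s => f s * f' s) (fun s => g s * f' s + f s * g' s) :=
  hf.bilin (ContinuousLinearMap.mul ℝ R) hf'

theorem IsLebesguePrimitive.inverse (hf : IsLebesguePrimitive a b c f g)
    (hunit : ∀ t ∈ Icc a b, IsUnit (f t)) :
    IsLebesguePrimitive a b (Ring.inverse c) (fun s => Ring.inverse (f s))
      (fun s => -(Ring.inverse (f s) * g s * Ring.inverse (f s))) := by
  have hcont : ContinuousOn (fun s => Ring.inverse (f s)) (Icc a b) := fun s hs => by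
    obtain ⟨u, hu⟩ := hunit s hs
    exact (hu ▸ NormedRing.inverse_continuousAt u).comp_continuousWithinAt (hf.continuousOn s hs)
  have hint : IntegrableOn (fun s => -(g s * Ring.inverse (f s))) (Icc a b) :=
    (integrableOn_bilin_of_continuousOn (ContinuousLinearMap.mul ℝ R).flip isCompact_Icc hcont
      hf.integrableOn).neg
  -- The candidate `w` solves `w' = -w g f⁻¹`, so that `w f` is constant.
  -- The candidate `w` solves `w' = -w g f⁻¹`, so that `w f` is constant.
  obtain ⟨w, hw⟩ := exists_isLebesguePrimitive_linear (ContinuousLinearMap.mul ℝ R).flip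
    (Ring.inverse c) hint
  simp only [ContinuousLinearMap.flip_apply, ContinuousLinearMap.mul_apply'] at hw
  have hwf : ∀ t ∈ Icc a b, w t = Ring.inverse (f t) := fun t ht => by
    have hfa : f a = c := hf.eq_initial (ht.1.trans ht.2)
    have hconst : w t * f t = Ring.inverse c * c :=
      (hw.mul hf).eq_of_eq_zero (fun s hs => by
        rw [mul_assoc, neg_mul, mul_assoc, Ring.inverse_mul_cancel _ (hunit s hs), mul_one, mul_neg,
          neg_add_cancel]) ht
    rw [← hfa, Ring.inverse_mul_cancel _ (hunit a ⟨le_rfl, ht.1.trans ht.2⟩)] at hconst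
    rw [← one_mul (Ring.inverse (f t)), ← hconst, mul_assoc, Ring.mul_inverse_cancel _ (hunit t ht),
      mul_one]
  exact hw.congr hwf fun s hs => by simp only [hwf s hs, mul_neg, mul_assoc]

end Inverse

section MatrixPrimitive

open Set
open scoped Matrix.Norms.L2Operator

theorem memLp_entry_of_abs_le {m n : Type*} {a b : ℝ} {M : ℝ → Matrix m n ℝ}
    (hM : ∀ i j, Measurable fun s => M s i j)
    (hbd : ∃ K, ∀ s ∈ Icc a b, ∀ i j, |M s i j| ≤ K) (p : ENNReal) (i : m) (j : n) :
    MemLp (fun s => M s i j) p (volume.restrict (Icc a b)) :=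
  hbd.elim fun K hK => .of_bound (hM i j).aestronglyMeasurable K
    (ae_restrict_of_forall_mem measurableSet_Icc fun s hs => hK s hs i j)

variable {m n : Type*} [Fintype m] [Fintype n] {a b t : ℝ}

theorem IsLebesguePrimitive.const_dotProduct {c : n → ℝ} {f g : ℝ → n → ℝ}
    (hf : IsLebesguePrimitive a b c f g) (x : n → ℝ) :
    IsLebesguePrimitive a b (x ⬝ᵥ c) (fun s => x ⬝ᵥ f s) (fun s => x ⬝ᵥ g s) :=
  hf.linearMap_apply (dotProductBilin ℝ ℝ x)

variable [DecidableEq n]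

theorem IsLebesguePrimitive.mulVec_const {c : Matrix m n ℝ} {M N : ℝ → Matrix m n ℝ}
    (hM : IsLebesguePrimitive a b c M N) (x : n → ℝ) :
    IsLebesguePrimitive a b (c *ᵥ x) (fun s => M s *ᵥ x) (fun s => N s *ᵥ x) :=
  hM.linearMap_apply ((Matrix.mulVecBilin ℝ ℝ).flip x)

theorem integrable_matrix_iff {α : Type*} [MeasurableSpace α] {μ : Measure α}
    {M : α → Matrix m n ℝ} : Integrable M μ ↔ ∀ i j, Integrable (fun s => M s i j) μ := by
  classical
  refine ⟨fun hM i j =>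
    (Matrix.entryLinearMap ℝ ℝ i j).toContinuousLinearMap.integrable_comp hM, fun hM => ?_⟩
  have hsum : M = fun s => ∑ i, ∑ j, Matrix.singleLinearMap ℝ i j (M s i j) :=
    funext fun s => matrix_eq_sum_single (M s)
  rw [hsum]
  exact integrable_finsetSum _ fun i _ => integrable_finsetSum _ fun j _ =>
    (Matrix.singleLinearMap ℝ i j).toContinuousLinearMap.integrable_comp (hM i j)

theorem isLebesguePrimitive_matrix_iff {c : Matrix m n ℝ} {M N : ℝ → Matrix m n ℝ} :
    IsLebesguePrimitive a b c M N ↔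
      ∀ i j, IsLebesguePrimitive a b (c i j) (fun s => M s i j) (fun s => N s i j) := by
  refine ⟨fun hM i j => hM.linearMap_apply (Matrix.entryLinearMap ℝ ℝ i j), fun hM => ?_⟩
  have hint : IntegrableOn N (Icc a b) := integrable_matrix_iff.2 fun i j => (hM i j).integrableOn
  refine ⟨hint, fun t ht => ?_⟩
  ext i j
  have hentry : (∫ s in a..t, N s) i j = ∫ s in a..t, N s i j := by
    simpa using ((isLebesguePrimitive_intervalIntegral hint).linearMap_apply
      (Matrix.entryLinearMap ℝ ℝ i j)).eq_add_integral t ht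
  rw [(hM i j).eq_add_integral t ht, Matrix.add_apply, hentry]

variable [DecidableEq m]

theorem integrable_mul_transpose {α k : Type*} [Fintype k] [MeasurableSpace α] {μ : Measure α}
    {C : α → Matrix m k ℝ} (hC : ∀ i j, MemLp (fun s => C s i j) 2 μ) :
    Integrable (fun s => C s * (C s)ᵀ) μ :=
  integrable_matrix_iff.2 fun i j => by
    simp only [Matrix.mul_apply, Matrix.transpose_apply]
    exact integrable_finsetSum _ fun l _ => (hC i l).integrable_mul (hC j l)

theorem integrable_transpose_mul {α k : Type*} [Fintype k] [MeasurableSpace α] {μ : Measure α}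
    {F : α → Matrix k m ℝ} (hF : ∀ i j, MemLp (fun s => F s i j) 2 μ) :
    Integrable (fun s => (F s)ᵀ * F s) μ :=
  integrable_mul_transpose fun i j => hF j i

theorem integrableOn_transpose {α : Type*} [MeasurableSpace α] {μ : Measure α} {K : Set α}
    {M : α → Matrix m n ℝ} (hM : IntegrableOn M K μ) : IntegrableOn (fun s => (M s)ᵀ) K μ :=
  (Matrix.transposeLinearEquiv m n ℝ ℝ).toLinearMap.toContinuousLinearMap.integrable_comp hM

theorem IsLebesguePrimitive.transpose {c : Matrix m n ℝ} {M N : ℝ → Matrix m n ℝ}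
    (hM : IsLebesguePrimitive a b c M N) :
    IsLebesguePrimitive a b cᵀ (fun s => (M s)ᵀ) (fun s => (N s)ᵀ) :=
  hM.linearMap_apply (Matrix.transposeLinearEquiv m n ℝ ℝ).toLinearMap

section PosSemidef

variable {c : Matrix n n ℝ} {M N : ℝ → Matrix n n ℝ}

theorem IsLebesguePrimitive.isHermitian (hM : IsLebesguePrimitive a b c M N) (hc : c.IsHermitian)
    (hN : ∀ s ∈ Icc a b, (N s).IsHermitian) (ht : t ∈ Icc a b) : (M t).IsHermitian := by
  have hconst := (hM.transpose.sub hM).eq_of_eq_zero (fun s hs => sub_eq_zero.2 (hN s hs)) ht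
  exact sub_eq_zero.1 (hconst.trans (sub_eq_zero.2 hc))

theorem IsLebesguePrimitive.posSemidef (hM : IsLebesguePrimitive a b c M N) (hc : c.PosSemidef)
    (hN : ∀ s ∈ Icc a b, (N s).PosSemidef) (ht : t ∈ Icc a b) : (M t).PosSemidef := by
  refine .of_dotProduct_mulVec_nonneg
    (hM.isHermitian hc.isHermitian (fun s hs => (hN s hs).isHermitian) ht) fun x => ?_
  rw [((hM.mulVec_const x).const_dotProduct (star x)).eq_add_integral t ht]
  exact add_nonneg (hc.dotProduct_mulVec_nonneg x) (integral_nonneg ht.1 fun s hs =>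
    (hN s ⟨hs.1, hs.2.trans ht.2⟩).dotProduct_mulVec_nonneg x)

theorem IsLebesguePrimitive.ae_mulVec_eq_zero (hM : IsLebesguePrimitive a b c M N)
    (hc : c.PosSemidef) (hN : ∀ s ∈ Icc a b, (N s).PosSemidef) (ht : t ∈ Icc a b) {x : n → ℝ}
    (hx : x ⬝ᵥ (M t *ᵥ x) = 0) : ∀ᵐ s, s ∈ Ioc a t → N s *ᵥ x = 0 := by
  have hN' : ∀ s ∈ Ioc a t, (N s).PosSemidef := fun s hs => hN s ⟨hs.1.le, hs.2.trans ht.2⟩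
  have hquad := (hM.mulVec_const x).const_dotProduct x
  have hnonneg : 0 ≤ᵐ[volume.restrict (Ioc a t)] fun s => x ⬝ᵥ (N s *ᵥ x) :=
    ae_restrict_of_forall_mem measurableSet_Ioc fun s hs => (hN' s hs).dotProduct_mulVec_nonneg x
  have hint : ∫ s in a..t, x ⬝ᵥ (N s *ᵥ x) = 0 := by
    have hsum := hquad.eq_add_integral t ht
    have hc_nonneg : 0 ≤ x ⬝ᵥ (c *ᵥ x) := hc.dotProduct_mulVec_nonneg x
    have hint_nonneg : 0 ≤ ∫ s in a..t, x ⬝ᵥ (N s *ᵥ x) := integral_nonneg ht.1 fun s hs =>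
      (hN s ⟨hs.1, hs.2.trans ht.2⟩).dotProduct_mulVec_nonneg x
    linarith
  have hae := (integral_eq_zero_iff_of_le_of_nonneg_ae ht.1 hnonneg
    (hquad.intervalIntegrable ht)).1 hint
  filter_upwards [(ae_restrict_iff' measurableSet_Ioc).1 hae] with s hs hst
  exact ((hN' s hst).dotProduct_mulVec_zero_iff x).1 (hs hst)

end PosSemidef

end MatrixPrimitive

section Riccati

open Set
open scoped Matrix.Norms.L2Operator

variable {ι : Type*} [Fintype ι] [DecidableEq ι] {a b t : ℝ} {A Q S : ℝ → Matrix ι ι ℝ}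
  {σ : Matrix ι ι ℝ} {U V Φ : ℝ → Matrix ι ι ℝ}

/-- `Φ` solves the Riccati equation `Φ' = AΦ + ΦAᵀ + Q - ΦSΦ`, `Φ(a) = σ`, on `[a, b]` in the
Carathéodory sense. The filtering equation is the case `Q = C̄C̄ᵀ`, `S = FᵀF`. -/
def IsRiccatiSolution (a b : ℝ) (A Q S : ℝ → Matrix ι ι ℝ) (σ : Matrix ι ι ℝ)
    (Φ : ℝ → Matrix ι ι ℝ) : Prop :=
  IsLebesguePrimitive a b σ Φ fun s => A s * Φ s + Φ s * (A s)ᵀ + Q s - Φ s * S s * Φ s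

/-- `(U, V)` solves on `[a, b]` the linear Hamiltonian system `U' = -AᵀU + SV`, `V' = QU + AV`,
`(U, V)(a) = (1, σ)`, which linearises the Riccati equation through `Φ = VU⁻¹`. -/
structure IsHamiltonianFlow (a b : ℝ) (A Q S : ℝ → Matrix ι ι ℝ) (σ : Matrix ι ι ℝ)
    (U V : ℝ → Matrix ι ι ℝ) : Prop where
  isLebesguePrimitive_fst : IsLebesguePrimitive a b 1 U fun s => -(A s)ᵀ * U s + S s * V s
  isLebesguePrimitive_snd : IsLebesguePrimitive a b σ V fun s => Q s * U s + A s * V s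

theorem exists_isHamiltonianFlow (hA : IntegrableOn A (Icc a b)) (hQ : IntegrableOn Q (Icc a b))
    (hS : IntegrableOn S (Icc a b)) (σ : Matrix ι ι ℝ) :
    ∃ U V, IsHamiltonianFlow a b A Q S σ U V := by
  have hH : IntegrableOn (fun s => fromBlocks (-(A s)ᵀ) (S s) (Q s) (A s)) (Icc a b) := by
    refine integrable_matrix_iff.2 ?_
    rintro (i | i) (j | j)
    exacts [(integrable_matrix_iff.1 hA j i).neg, integrable_matrix_iff.1 hS i j,
      integrable_matrix_iff.1 hQ i j, integrable_matrix_iff.1 hA i j]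
  obtain ⟨W, hW⟩ := exists_isLebesguePrimitive_linear
    (ContinuousLinearMap.mul ℝ (Matrix (ι ⊕ ι) (ι ⊕ ι) ℝ)) (fromBlocks 1 0 σ 0) hH
  simp only [ContinuousLinearMap.mul_apply'] at hW
  have hentry := isLebesguePrimitive_matrix_iff.1 hW
  refine ⟨fun s => (W s).toBlocks₁₁, fun s => (W s).toBlocks₂₁,
    isLebesguePrimitive_matrix_iff.2 fun i j => ?_, isLebesguePrimitive_matrix_iff.2 fun i j => ?_⟩
  · simpa [Matrix.mul_apply, Matrix.toBlocks₁₁, Matrix.toBlocks₂₁, Finset.sum_neg_distrib]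
      using hentry (.inl i) (.inl j)
  · simpa [Matrix.mul_apply, Matrix.toBlocks₁₁, Matrix.toBlocks₂₁] using hentry (.inr i) (.inl j)

namespace IsHamiltonianFlow

theorem transpose_mul (h : IsHamiltonianFlow a b A Q S σ U V)
    (hS : ∀ s ∈ Icc a b, (S s).IsSymm) :
    IsLebesguePrimitive a b σ (fun s => (U s)ᵀ * V s)
      (fun s => (V s)ᵀ * S s * V s + (U s)ᵀ * Q s * U s) := by
  have hUV := h.isLebesguePrimitive_fst.transpose.mul h.isLebesguePrimitive_snd
  rw [transpose_one, one_mul] at hUV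
  refine hUV.congr (fun _ _ => rfl) fun s hs => ?_
  simp only [transpose_add, Matrix.transpose_mul, transpose_neg, transpose_transpose,
    (hS s hs).eq]
  noncomm_ring

theorem posSemidef_transpose_mul (h : IsHamiltonianFlow a b A Q S σ U V) (hσ : σ.PosSemidef)
    (hQ : ∀ s ∈ Icc a b, (Q s).PosSemidef) (hS : ∀ s ∈ Icc a b, (S s).PosSemidef)
    (ht : t ∈ Icc a b) : ((U t)ᵀ * V t).PosSemidef :=
  (h.transpose_mul fun s hs => (hS s hs).isHermitian).posSemidef hσ (fun s hs =>
    ((hS s hs).conjTranspose_mul_mul_same (V s)).add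
      ((hQ s hs).conjTranspose_mul_mul_same (U s))) ht

theorem ae_mulVec_mulVec_eq_zero (h : IsHamiltonianFlow a b A Q S σ U V) (hσ : σ.PosSemidef)
    (hQ : ∀ s ∈ Icc a b, (Q s).PosSemidef) (hS : ∀ s ∈ Icc a b, (S s).PosSemidef)
    (ht : t ∈ Icc a b) {x : ι → ℝ} (hx : U t *ᵥ x = 0) :
    ∀ᵐ s, s ∈ Ioc a t → S s *ᵥ V s *ᵥ x = 0 := by
  have hquad : x ⬝ᵥ (((U t)ᵀ * V t) *ᵥ x) = 0 := by
    rw [← mulVec_mulVec, dotProduct_mulVec, vecMul_transpose, hx, zero_dotProduct]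
  filter_upwards [(h.transpose_mul fun s hs => (hS s hs).isHermitian).ae_mulVec_eq_zero hσ
    (fun s hs => ((hS s hs).conjTranspose_mul_mul_same (V s)).add
      ((hQ s hs).conjTranspose_mul_mul_same (U s))) ht hquad] with s hs hst
  have hsab : s ∈ Icc a b := ⟨hst.1.le, hst.2.trans ht.2⟩
  have hVSV : 0 ≤ V s *ᵥ x ⬝ᵥ (S s *ᵥ V s *ᵥ x) := (hS s hsab).dotProduct_mulVec_nonneg _
  have hUQU : 0 ≤ U s *ᵥ x ⬝ᵥ (Q s *ᵥ U s *ᵥ x) := (hQ s hsab).dotProduct_mulVec_nonneg _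
  have hsum : V s *ᵥ x ⬝ᵥ (S s *ᵥ V s *ᵥ x) + U s *ᵥ x ⬝ᵥ (Q s *ᵥ U s *ᵥ x) = 0 := by
    have hx_sum := congrArg (x ⬝ᵥ ·) (hs hst)
    simpa only [add_mulVec, dotProduct_add, ← mulVec_mulVec, dotProduct_mulVec x, vecMul_transpose,
      dotProduct_zero] using hx_sum
  exact ((hS s hsab).dotProduct_mulVec_zero_iff _).1 (by simp only [star_trivial]; linarith)

theorem isUnit_fst (h : IsHamiltonianFlow a b A Q S σ U V) (hA : IntegrableOn A (Icc a b))
    (hσ : σ.PosSemidef) (hQ : ∀ s ∈ Icc a b, (Q s).PosSemidef)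
    (hS : ∀ s ∈ Icc a b, (S s).PosSemidef) (ht : t ∈ Icc a b) : IsUnit (U t) := by
  refine Matrix.mulVec_injective_iff_isUnit.1
    ((injective_iff_map_eq_zero (U t).mulVecLin).2 fun x (hx : U t *ᵥ x = 0) => ?_)
  -- With `P' = P Aᵀ`, `P(a) = 1`, the product `P U x` has derivative `P S V x`, which vanishes a.e.
  -- With `P' = P Aᵀ`, `P(a) = 1`, the product `P U x` has derivative `P S V x`, which vanishes a.e.
  obtain ⟨P, hP⟩ := exists_isLebesguePrimitive_linear
    (ContinuousLinearMap.mul ℝ (Matrix ι ι ℝ)).flip 1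
    (integrableOn_transpose hA)
  simp only [ContinuousLinearMap.flip_apply, ContinuousLinearMap.mul_apply'] at hP
  have hPU : IsLebesguePrimitive a b 1 (fun s => P s * U s) fun s => P s * (S s * V s) := by
    have hmul := hP.mul h.isLebesguePrimitive_fst
    rw [mul_one] at hmul
    exact hmul.congr (fun _ _ => rfl) fun s _ => by noncomm_ring
  have hPUx : (P t * U t) *ᵥ x = 1 *ᵥ x := by
    refine (hPU.mulVec_const x).eq_of_ae_eq_zero ht ?_
    filter_upwards [h.ae_mulVec_mulVec_eq_zero hσ hQ hS ht hx] with s hs hst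
    rw [← mulVec_mulVec, ← mulVec_mulVec, hs hst, mulVec_zero]
  rw [one_mulVec, ← mulVec_mulVec, hx, mulVec_zero] at hPUx
  exact hPUx.symm

theorem isRiccatiSolution (h : IsHamiltonianFlow a b A Q S σ U V)
    (hU : ∀ t ∈ Icc a b, IsUnit (U t)) :
    IsRiccatiSolution a b A Q S σ fun t => V t * Ring.inverse (U t) := by
  have hmul := h.isLebesguePrimitive_snd.mul (h.isLebesguePrimitive_fst.inverse hU)
  rw [Ring.inverse_one, mul_one] at hmul
  refine IsLebesguePrimitive.congr hmul (fun _ _ => rfl) fun s hs => ?_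
  have hcancel : U s * Ring.inverse (U s) = 1 := Ring.mul_inverse_cancel _ (hU s hs)
  calc (Q s * U s + A s * V s) * Ring.inverse (U s) + V s * -(Ring.inverse (U s) *
        (-(A s)ᵀ * U s + S s * V s) * Ring.inverse (U s))
      = A s * (V s * Ring.inverse (U s))
        + V s * Ring.inverse (U s) * (A s)ᵀ * (U s * Ring.inverse (U s))
        + Q s * (U s * Ring.inverse (U s))
        - V s * Ring.inverse (U s) * S s * (V s * Ring.inverse (U s)) := by noncomm_ring
    _ = _ := by simp only [hcancel, mul_one]

theorem posSemidef_mul_inverse (h : IsHamiltonianFlow a b A Q S σ U V)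
    (hU : IsUnit (U t)) (hσ : σ.PosSemidef) (hQ : ∀ s ∈ Icc a b, (Q s).PosSemidef)
    (hS : ∀ s ∈ Icc a b, (S s).PosSemidef) (ht : t ∈ Icc a b) :
    (V t * Ring.inverse (U t)).PosSemidef := by
  have hcancel : (Ring.inverse (U t))ᵀ * (U t)ᵀ = 1 := by
    rw [← Matrix.transpose_mul, Ring.mul_inverse_cancel _ hU, transpose_one]
  have hcongr := (h.posSemidef_transpose_mul hσ hQ hS ht).conjTranspose_mul_mul_same
    (Ring.inverse (U t))
  rwa [conjTranspose_eq_transpose_of_trivial, ← mul_assoc, hcancel, one_mul] at hcongr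

theorem eq_mul_inverse (h : IsHamiltonianFlow a b A Q S σ U V)
    (hU : IsUnit (U t)) (hA : IntegrableOn A (Icc a b)) (hS : IntegrableOn S (Icc a b))
    (hΦ : IsRiccatiSolution a b A Q S σ Φ) (ht : t ∈ Icc a b) :
    Φ t = V t * Ring.inverse (U t) := by
  have hD : IsLebesguePrimitive a b 0 (fun s => V s - Φ s * U s)
      (fun s => (A s - Φ s * S s) * (V s - Φ s * U s)) := by
    have hsub := h.isLebesguePrimitive_snd.sub
      (IsLebesguePrimitive.mul hΦ h.isLebesguePrimitive_fst)
    rw [mul_one, sub_self] at hsub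
    exact hsub.congr (fun _ _ => rfl) fun s _ => by noncomm_ring
  have hL : IntegrableOn (fun s => A s - Φ s * S s) (Icc a b) :=
    hA.sub (hS.continuousOn_mul (IsLebesguePrimitive.continuousOn hΦ) isCompact_Icc)
  have hzero : V t - Φ t * U t = 0 := hD.eq_zero_of_linear (ContinuousLinearMap.mul ℝ _) hL ht
  rw [sub_eq_zero.1 hzero, mul_assoc, Ring.mul_inverse_cancel _ hU, mul_one]

end IsHamiltonianFlow

theorem integrableOn_riccati (hA : IntegrableOn A (Icc a b)) (hQ : IntegrableOn Q (Icc a b))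
    (hS : IntegrableOn S (Icc a b)) (hΦ : ContinuousOn Φ (Icc a b)) :
    IntegrableOn (fun s => A s * Φ s + Φ s * (A s)ᵀ + Q s - Φ s * S s * Φ s) (Icc a b) := by
  exact (((hA.mul_continuousOn hΦ isCompact_Icc).add
    ((integrableOn_transpose hA).continuousOn_mul hΦ isCompact_Icc)).add hQ).sub
    ((hS.continuousOn_mul hΦ isCompact_Icc).mul_continuousOn hΦ isCompact_Icc)

theorem riccatiIntSol_iff {n r d : ℕ} {T : ℝ} {A : ℝ → Matrix (Fin n) (Fin n) ℝ}
    {F : ℝ → Matrix (Fin r) (Fin n) ℝ} {C : ℝ → Matrix (Fin n) (Fin d) ℝ}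
    {σ : Matrix (Fin n) (Fin n) ℝ} {Φ : ℝ → Matrix (Fin n) (Fin n) ℝ}
    (hA : IntegrableOn A (Icc 0 T)) (hC : IntegrableOn (fun s => C s * (C s)ᵀ) (Icc 0 T))
    (hF : IntegrableOn (fun s => (F s)ᵀ * F s) (Icc 0 T)) :
    RiccatiIntSol n r d T A F C σ Φ ↔
      IsRiccatiSolution 0 T A (fun s => C s * (C s)ᵀ) (fun s => (F s)ᵀ * F s) σ Φ := by
  simp only [RiccatiIntSol, Matrix.mul_assoc _ (F _)ᵀ (F _)]
  refine ⟨fun h => isLebesguePrimitive_matrix_iff.2 fun i j =>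
    ⟨integrable_matrix_iff.1 (integrableOn_riccati hA hC hF ?_) i j, fun t ht => h.2 t ht i j⟩,
    fun h => ⟨fun i j => ?_, fun t ht i j => ?_⟩⟩
  · exact continuousOn_pi.2 fun i => continuousOn_pi.2 fun j => h.1 i j
  · exact (isLebesguePrimitive_matrix_iff.1 h i j).continuousOn
  · exact (isLebesguePrimitive_matrix_iff.1 h i j).eq_add_integral t ht

theorem stmt8_general (hA : IntegrableOn A (Icc a b)) (hQ : IntegrableOn Q (Icc a b))
    (hS : IntegrableOn S (Icc a b)) (hQ_psd : ∀ s ∈ Icc a b, (Q s).PosSemidef)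
    (hS_psd : ∀ s ∈ Icc a b, (S s).PosSemidef) (hσ : σ.PosSemidef) :
    ∃ Φ, IsRiccatiSolution a b A Q S σ Φ ∧
      (∀ Ψ, IsRiccatiSolution a b A Q S σ Ψ → ∀ t ∈ Icc a b, Ψ t = Φ t) ∧
      ∀ t ∈ Icc a b, (Φ t).PosSemidef := by
  obtain ⟨U, V, hUV⟩ := exists_isHamiltonianFlow hA hQ hS σ
  have hU : ∀ t ∈ Icc a b, IsUnit (U t) := fun t ht => hUV.isUnit_fst hA hσ hQ_psd hS_psd ht
  exact ⟨fun t => V t * Ring.inverse (U t), hUV.isRiccatiSolution hU,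
    fun Ψ hΨ t ht => hUV.eq_mul_inverse (hU t ht) hA hS hΨ ht,
    fun t ht => hUV.posSemidef_mul_inverse (hU t ht) hσ hQ_psd hS_psd ht⟩

end Riccati

theorem stmt8 (n r d : ℕ) (hn : 0 < n) (hr : 0 < r) (hd : 0 < d)
    (T : ℝ) (hT : 0 < T)
    (Abar : ℝ → Matrix (Fin n) (Fin n) ℝ)
    (F : ℝ → Matrix (Fin r) (Fin n) ℝ)
    (Cbar : ℝ → Matrix (Fin n) (Fin d) ℝ)
    (hAmeas : ∀ i j, Measurable fun s => Abar s i j)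
    (hFmeas : ∀ i j, Measurable fun s => F s i j)
    (hCmeas : ∀ i j, Measurable fun s => Cbar s i j)
    (hAbd : ∃ K, ∀ s ∈ Set.Icc (0 : ℝ) T, ∀ i j, |Abar s i j| ≤ K)
    (hFbd : ∃ K, ∀ s ∈ Set.Icc (0 : ℝ) T, ∀ i j, |F s i j| ≤ K)
    (hCbd : ∃ K, ∀ s ∈ Set.Icc (0 : ℝ) T, ∀ i j, |Cbar s i j| ≤ K)
    (σ : Matrix (Fin n) (Fin n) ℝ) (hσ : σ.PosSemidef) :
    ∃ Φ : ℝ → Matrix (Fin n) (Fin n) ℝ,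
      RiccatiIntSol n r d T Abar F Cbar σ Φ ∧
        (∀ Ψ : ℝ → Matrix (Fin n) (Fin n) ℝ,
          RiccatiIntSol n r d T Abar F Cbar σ Ψ → ∀ t ∈ Set.Icc (0 : ℝ) T, Ψ t = Φ t) ∧
        ∀ t ∈ Set.Icc (0 : ℝ) T, (Φ t).PosSemidef := by
  have hA := integrable_matrix_iff.2 fun i j =>
    memLp_one_iff_integrable.1 (memLp_entry_of_abs_le hAmeas hAbd 1 i j)
  have hC := integrable_mul_transpose (memLp_entry_of_abs_le hCmeas hCbd 2)
  have hF := integrable_transpose_mul (memLp_entry_of_abs_le hFmeas hFbd 2)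
  simpa only [riccatiIntSol_iff hA hC hF] using stmt8_general hA hC hF
    (fun s _ => posSemidef_self_mul_conjTranspose (Cbar s))
    (fun s _ => posSemidef_conjTranspose_mul_self (F s)) hσ
end

section
/- Let D, n, m be positive integers, T > 0, δ > 0, and let Π = (π^{ℓj})_{ℓ,j=1}^D be a real D×D matrix with π^{ℓj} ≥ 0 for all ℓ ≠ j and π^{ℓℓ} = −Σ_{j≠ℓ} π^{ℓj} for every ℓ. For each ℓ ∈ {1,…,D}, let A_ℓ : [0,T] → ℝ^{n×n}, B_ℓ : [0,T] → ℝ^{n×m}, H_ℓ : [0,T] → ℝ^{n×n}, G_ℓ : [0,T] → ℝ^{m×n}, R_ℓ : [0,T] → ℝ^{m×m} be continuous and bounded, with H_ℓ(t) and R_ℓ(t) symmetric, R_ℓ(t) − δ·I positive semidefinite, and H_ℓ(t) − G_ℓ(t)ᵀ R_ℓ(t)⁻¹ G_ℓ(t) positive semidefinite for every t; let S_ℓ be an n×n symmetric positive semidefinite matrix. Then there exists a unique family of continuously differentiable functions Λ_ℓ : [0,T] → ℝ^{n×n}, ℓ ∈ {1,…,D}, satisfying, for every ℓ and every t ∈ [0,T],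 Λ_ℓ'(t) + A_ℓ(t)ᵀΛ_ℓ(t) + Λ_ℓ(t)A_ℓ(t) + H_ℓ(t) − (B_ℓ(t)ᵀΛ_ℓ(t) + G_ℓ(t))ᵀ R_ℓ(t)⁻¹ (B_ℓ(t)ᵀΛ_ℓ(t) + G_ℓ(t)) + Σ_{j=1}^D π^{ℓj} Λ_j(t) = 0 with Λ_ℓ(T) = S_ℓ; moreover, Λ_ℓ(t) is symmetric positive semidefinite for every ℓ and every t ∈ [0,T]. -/
open Matrix

/-- `Λ` is a (continuously differentiable) solution on `[0,T]` of the system of coupled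
Riccati equations
`Λ_ℓ' + A_ℓᵀΛ_ℓ + Λ_ℓA_ℓ + H_ℓ − (B_ℓᵀΛ_ℓ + G_ℓ)ᵀ R_ℓ⁻¹ (B_ℓᵀΛ_ℓ + G_ℓ) + Σ_j π^{ℓj} Λ_j = 0`
with terminal conditions `Λ_ℓ(T) = S_ℓ`. -/
def CoupledRiccatiSol (D n m : ℕ) (T : ℝ) (P : Fin D → Fin D → ℝ)
    (A : Fin D → ℝ → Matrix (Fin n) (Fin n) ℝ)
    (B : Fin D → ℝ → Matrix (Fin n) (Fin m) ℝ)
    (H : Fin D → ℝ → Matrix (Fin n) (Fin n) ℝ)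
    (G : Fin D → ℝ → Matrix (Fin m) (Fin n) ℝ)
    (R : Fin D → ℝ → Matrix (Fin m) (Fin m) ℝ)
    (S : Fin D → Matrix (Fin n) (Fin n) ℝ)
    (Λ : Fin D → ℝ → Matrix (Fin n) (Fin n) ℝ) : Prop :=
  (∀ ℓ, Λ ℓ T = S ℓ) ∧
    ∀ ℓ, ∀ t ∈ Set.Icc (0 : ℝ) T, ∀ i j,
      HasDerivAt (fun s => Λ ℓ s i j)
        (-(((A ℓ t)ᵀ * Λ ℓ t + Λ ℓ t * A ℓ t + H ℓ t
            - ((B ℓ t)ᵀ * Λ ℓ t + G ℓ t)ᵀ * (R ℓ t)⁻¹ * ((B ℓ t)ᵀ * Λ ℓ t + G ℓ t)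
            + ∑ j', P ℓ j' • Λ j' t) i j)) t

/-!
A coupled Lyapunov system `X' + lyapunovOperator P C X + Q = 0` solved backwards in time preserves
positivity. One adds a small strict supersolution `β * exp (c * (b - t)) • 1`; if the sum stopped
being positive definite, then at the first such time, going backwards from `b`, some `X_ℓ` would
have a kernel vector `x`. There only the forcing, now positive definite, and the couplings
`P ℓ j ≥ 0`, `j ≠ ℓ`, contribute to the derivative of `x ⬝ᵥ X_ℓ *ᵥ x`, which makes it negative,
although the function has just come down to zero backwards in time.

A solution of the Riccati system solves two such Lyapunov systems. With the closed-loop matrices the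
forcing is nonnegative, whence `0 ≤ X`; with the matrices `A` the forcing is at most `H`, whence
`X` lies below an exponential supersolution. This a priori bound excludes blow-up, so truncating
the locally Lipschitz vector field outside a large ball and applying Picard–Lindelöf gives
existence on the whole interval; uniqueness is Grönwall's inequality.
-/

open Set Metric Filter Topology
open scoped NNReal Matrix.Norms.L2Operator MatrixOrder

section TerminalValueProblem

lemma ge_of_forall_Ioc_ge {f : ℝ → ℝ} {a b c s : ℝ} (hf : ContinuousOn f (Icc a b))
    (hs : s ∈ Icc a b) (hb : c ≤ f b) (h : ∀ t ∈ Ioc s b, c ≤ f t) : c ≤ f s := by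
  rcases hs.2.eq_or_lt with rfl | hsb
  · exact hb
  · have hlim : Tendsto f (𝓝[>] s) (𝓝 (f s)) :=
      (hf s hs).mono_left (nhdsWithin_le_of_mem (mem_of_superset (Ioc_mem_nhdsGT hsb)
        fun _ ht => ⟨hs.1.trans ht.1.le, ht.2⟩))
    exact ge_of_tendsto hlim (mem_of_superset (Ioc_mem_nhdsGT hsb) h)

lemma forall_lt_of_forall_le_imp_lt {g : ℝ → ℝ} {a b M : ℝ} (hg : ContinuousOn g (Icc a b))
    (hb : g b ≤ M) (h : ∀ s ∈ Icc a b, (∀ t ∈ Icc s b, g t ≤ M) → g s < M) :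
    ∀ t ∈ Icc a b, g t < M := by
  by_contra! hbad
  have hcompact : IsCompact (Icc a b ∩ g ⁻¹' Ici M) :=
    isCompact_Icc.of_isClosed_subset (hg.preimage_isClosed_of_isClosed isClosed_Icc isClosed_Ici)
      inter_subset_left
  obtain ⟨s, ⟨hs, hMs⟩, hmax⟩ := hcompact.exists_isGreatest hbad
  have hafter : ∀ t ∈ Ioc s b, g t ≤ M := fun t ht => by
    by_contra! hlt
    exact ht.1.not_ge (hmax ⟨⟨hs.1.trans ht.1.le, ht.2⟩, hlt.le⟩)
  have hsM : g s ≤ M := neg_le_neg_iff.1 <| ge_of_forall_Ioc_ge (f := -g) hg.neg hs (neg_le_neg hb)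
    fun t ht => neg_le_neg (hafter t ht)
  refine (h s hs fun t ht => ?_).not_ge hMs
  rcases ht.1.eq_or_lt with rfl | hst
  exacts [hsM, hafter t ⟨hst, ht.2⟩]

variable {E : Type*} [NormedAddCommGroup E] [NormedSpace ℝ E]

/-- The radial retraction of a normed space onto its closed ball of radius `r > 0` about `0`; it
truncates vector fields which are only locally Lipschitz. -/
noncomputable def radialRetraction (r : ℝ) (x : E) : E := (r / max ‖x‖ r) • x

lemma radialRetraction_of_norm_le {r : ℝ} (hr : 0 < r) {x : E} (hx : ‖x‖ ≤ r) :
    radialRetraction r x = x := by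
  rw [radialRetraction, max_eq_right hx, div_self hr.ne', one_smul]

lemma norm_radialRetraction_le {r : ℝ} (hr : 0 < r) (x : E) : ‖radialRetraction r x‖ ≤ r := by
  have hmax : 0 < max ‖x‖ r := lt_max_of_lt_right hr
  rw [radialRetraction, norm_smul, Real.norm_of_nonneg (by positivity), div_mul_eq_mul_div,
    div_le_iff₀ hmax]
  exact mul_le_mul_of_nonneg_left (le_max_left _ _) hr.le

lemma lipschitzWith_radialRetraction {r : ℝ} (hr : 0 < r) :
    LipschitzWith 2 (radialRetraction r : E → E) := by
  refine LipschitzWith.of_dist_le_mul fun x y => ?_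
  set p := max ‖x‖ r
  set q := max ‖y‖ r
  have hp : 0 < p := lt_max_of_lt_right hr
  have hq : 0 < q := lt_max_of_lt_right hr
  have hpq : |q - p| ≤ ‖x - y‖ := calc
    |q - p| ≤ |‖y‖ - ‖x‖| := abs_max_sub_max_le_abs _ _ _
    _ ≤ ‖x - y‖ := by rw [norm_sub_rev]; exact abs_norm_sub_norm_le y x
  have hscale : |r / p - r / q| * ‖y‖ ≤ |q - p| := calc
    |r / p - r / q| * ‖y‖ = |q - p| * (r / p * (‖y‖ / q)) := by
      rw [show r / p - r / q = (q - p) * (r / (p * q)) by field_simp, abs_mul,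
        abs_of_nonneg (by positivity : 0 ≤ r / (p * q))]
      field_simp
    _ ≤ |q - p| * (1 * 1) := by
      gcongr
      exacts [div_le_one_of_le₀ (le_max_right _ _) hp.le, div_le_one_of_le₀ (le_max_left _ _) hq.le]
    _ = |q - p| := by ring
  calc dist (radialRetraction r x) (radialRetraction r y)
      = ‖(r / p) • (x - y) + (r / p - r / q) • y‖ := by
        rw [dist_eq_norm, radialRetraction, radialRetraction]
        congr 1
        module
    _ ≤ r / p * ‖x - y‖ + |r / p - r / q| * ‖y‖ := by
        refine (norm_add_le _ _).trans_eq ?_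
        rw [norm_smul, norm_smul, Real.norm_of_nonneg (by positivity), Real.norm_eq_abs]
    _ ≤ 1 * ‖x - y‖ + ‖x - y‖ := by
        gcongr
        exacts [div_le_one_of_le₀ (le_max_right _ _) hp.le, hscale.trans hpq]
    _ = (2 : ℝ≥0) * dist x y := by rw [dist_eq_norm, NNReal.coe_ofNat]; ring

variable {v : ℝ → E → E} {a b : ℝ}

lemma integralCurve_eqOn_Icc_of_eq_right {α β : ℝ → E}
    (hv : ∀ r, ∃ K, ∀ t ∈ Icc a b, LipschitzOnWith K (v t) (closedBall 0 r))
    (hα : IsIntegralCurveOn α v (Icc a b)) (hβ : IsIntegralCurveOn β v (Icc a b))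
    (hb : α b = β b) : EqOn α β (Icc a b) := by
  obtain ⟨r, hr⟩ := isCompact_Icc.exists_bound_of_continuousOn hα.continuousOn
  obtain ⟨r', hr'⟩ := isCompact_Icc.exists_bound_of_continuousOn hβ.continuousOn
  obtain ⟨K, hK⟩ := hv (max r r')
  have hleft : ∀ {γ : ℝ → E}, IsIntegralCurveOn γ v (Icc a b) →
      ∀ t ∈ Ioc a b, HasDerivWithinAt γ (v t (γ t)) (Iic t) t := fun hγ t ht =>
    (hγ t (Ioc_subset_Icc_self ht)).mono_of_mem_nhdsWithin <|
      mem_of_superset (Ioc_mem_nhdsLE ht.1) fun _ hu => ⟨hu.1.le, hu.2.trans ht.2⟩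
  exact ODE_solution_unique_of_mem_Icc_left (s := fun _ => closedBall 0 (max r r'))
    (fun t ht => hK t (Ioc_subset_Icc_self ht)) hα.continuousOn (hleft hα)
    (fun t ht => mem_closedBall_zero_iff.2 <|
      (hr t (Ioc_subset_Icc_self ht)).trans (le_max_left _ _))
    hβ.continuousOn (hleft hβ)
    (fun t ht => mem_closedBall_zero_iff.2 <|
      (hr' t (Ioc_subset_Icc_self ht)).trans (le_max_right _ _)) hb

variable [CompleteSpace E]

lemma exists_hasDerivAt_of_lipschitzWith_of_norm_le (hab : a ≤ b) {K L : ℝ≥0}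
    (hlip : ∀ t ∈ Icc a b, LipschitzWith K (v t)) (hcont : ∀ x, ContinuousOn (v · x) (Icc a b))
    (hL : ∀ t ∈ Icc a b, ∀ x, ‖v t x‖ ≤ L) (x₀ : E) :
    ∃ α : ℝ → E, α b = x₀ ∧ ∀ t ∈ Icc a b, HasDerivAt α (v t (α t)) t := by
  let w : ℝ → E → E := fun t => v (projIcc a b hab t)
  have hmem : ∀ t, (projIcc a b hab t : ℝ) ∈ Icc a b := fun t => (projIcc a b hab t).2
  have hpl : IsPicardLindelof w (tmin := a - 1) (tmax := b + 1)
      ⟨b, by linarith, by linarith⟩ x₀ (L * ⟨b - a + 1, by linarith⟩) 0 L K :=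
    { lipschitzOnWith := fun t _ => (hlip _ (hmem t)).lipschitzOnWith
      continuousOn := fun x _ => ((hcont x).comp_continuous
        (continuous_subtype_val.comp continuous_projIcc) hmem).continuousOn
      norm_le := fun t _ x _ => hL _ (hmem t) x
      mul_max_le := by
        simp only [NNReal.coe_zero, sub_zero]
        exact mul_le_mul_of_nonneg_left (max_le (by linarith) (by linarith)) L.2 }
  obtain ⟨α, hb, hα⟩ := hpl.exists_eq_forall_mem_Icc_hasDerivWithinAt₀
  refine ⟨α, hb, fun t ht => ?_⟩
  have hder := (hα t ⟨by linarith [ht.1], by linarith [ht.2]⟩).hasDerivAt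
    (Icc_mem_nhds (by linarith [ht.1]) (by linarith [ht.2]))
  simpa only [w, projIcc_of_mem hab ht] using hder

theorem exists_hasDerivAt_of_integralCurve_norm_le (hab : a ≤ b)
    (hlip : ∀ r, ∃ K, ∀ t ∈ Icc a b, LipschitzOnWith K (v t) (closedBall 0 r))
    (hcont : ∀ x, ContinuousOn (v · x) (Icc a b)) {x₀ : E} {M : ℝ}
    (hM : ∀ s ∈ Icc a b, ∀ α : ℝ → E, α b = x₀ → IsIntegralCurveOn α v (Icc s b) → ‖α s‖ ≤ M) :
    ∃ α : ℝ → E, α b = x₀ ∧ ∀ t ∈ Icc a b, HasDerivAt α (v t (α t)) t := by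
  have hx₀ : ‖x₀‖ ≤ M := hM b (right_mem_Icc.2 hab) (fun _ => x₀) rfl fun t _ =>
    HasFDerivWithinAt.of_subsingleton (by simp)
  set r := M + 1
  have hr : 0 < r := by linarith [norm_nonneg x₀]
  obtain ⟨K, hK⟩ := hlip r
  obtain ⟨L, hL⟩ := isCompact_Icc.exists_bound_of_continuousOn (hcont 0)
  have hmem : ∀ x : E, radialRetraction r x ∈ closedBall (0 : E) r := fun x =>
    mem_closedBall_zero_iff.2 (norm_radialRetraction_le hr x)
  have hbound : ∀ t ∈ Icc a b, ∀ x, ‖v t (radialRetraction r x)‖ ≤ K * r + L := fun t ht x => calc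
    ‖v t (radialRetraction r x)‖
      ≤ ‖v t (radialRetraction r x) - v t 0‖ + ‖v t 0‖ := norm_le_norm_sub_add _ _
    _ ≤ K * ‖radialRetraction r x - 0‖ + L := add_le_add
        ((hK t ht).norm_sub_le (hmem x) (mem_closedBall_self hr.le)) (hL t ht)
    _ ≤ K * r + L := by
        rw [sub_zero]
        gcongr
        exact norm_radialRetraction_le hr x
  obtain ⟨α, hαb, hα⟩ := exists_hasDerivAt_of_lipschitzWith_of_norm_le
    (v := fun t x => v t (radialRetraction r x)) (L := (K * r + L).toNNReal) hab
    (fun t ht => lipschitzOnWith_univ.1 <| (hK t ht).comp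
      (lipschitzWith_radialRetraction hr).lipschitzOnWith fun x _ => hmem x)
    (fun x => hcont _) (fun t ht x => (hbound t ht x).trans (Real.le_coe_toNNReal _)) x₀
  have huntruncated : ∀ t ∈ Icc a b, ‖α t‖ ≤ r → HasDerivAt α (v t (α t)) t := fun t ht hle => by
    simpa only [radialRetraction_of_norm_le hr hle] using hα t ht
  have hαr : ∀ t ∈ Icc a b, ‖α t‖ < r := by
    refine forall_lt_of_forall_le_imp_lt
      (fun t ht => (hα t ht).continuousAt.norm.continuousWithinAt)
      (by rw [hαb]; linarith) fun s hs hle => ?_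
    refine (hM s hs α hαb fun t ht => ?_).trans_lt (lt_add_one M)
    exact (huntruncated t ⟨hs.1.trans ht.1, ht.2⟩ (hle t ht)).hasDerivWithinAt
  exact ⟨α, hαb, fun t ht => huntruncated t ht (hαr t ht).le⟩

end TerminalValueProblem

lemma exists_lipschitzOnWith_closedBall_comp {E F G : Type*} [NormedAddCommGroup E]
    [NormedSpace ℝ E] [NormedAddCommGroup F] [NormedSpace ℝ F] [ProperSpace F]
    [NormedAddCommGroup G] [NormedSpace ℝ G]
    {f : E × F → G} (hf : ContDiff ℝ 1 f) {T : Type*} [TopologicalSpace T] {c : T → E} {s : Set T}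
    (hs : IsCompact s) (hc : ContinuousOn c s) (r : ℝ) :
    ∃ K, ∀ t ∈ s, LipschitzOnWith K (fun x => f (c t, x)) (closedBall 0 r) := by
  obtain ⟨K, hK⟩ := hf.locallyLipschitz.locallyLipschitzOn.exists_lipschitzOnWith_of_compact
    ((hs.image_of_continuousOn hc).prod (isCompact_closedBall (0 : F) r))
  refine ⟨K, fun t ht x hx y hy => ?_⟩
  simpa [Prod.edist_eq] using hK (x := (c t, x)) (y := (c t, y))
    ⟨mem_image_of_mem c ht, hx⟩ ⟨mem_image_of_mem c ht, hy⟩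

lemma forall_pos_of_deriv_neg_at_zero {K : Type*} [TopologicalSpace K] [CompactSpace K]
    {q q' : ℝ → K → ℝ} {s T : ℝ}
    (hq : ContinuousOn (Function.uncurry q) (Icc s T ×ˢ univ))
    (hq' : ∀ t ∈ Icc s T, ∀ k, HasDerivWithinAt (q · k) (q' t k) (Icc s T) t)
    (hT : ∀ k, 0 < q T k)
    (hneg : ∀ t ∈ Icc s T, ∀ k, (∀ k', 0 ≤ q t k') → q t k = 0 → q' t k < 0) :
    ∀ t ∈ Icc s T, ∀ k, 0 < q t k := by
  by_contra! hbad
  have hcompact : IsCompact ((Icc s T ×ˢ univ) ∩ Function.uncurry q ⁻¹' Iic 0) :=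
    (isCompact_Icc.prod isCompact_univ).of_isClosed_subset
      (hq.preimage_isClosed_of_isClosed (isClosed_Icc.prod isClosed_univ) isClosed_Iic)
      inter_subset_left
  obtain ⟨t, ht, k, hk⟩ := hbad
  obtain ⟨⟨τ, κ⟩, ⟨⟨hτ, -⟩, hle : q τ κ ≤ 0⟩, hmax⟩ :=
    hcompact.exists_isMaxOn ⟨(t, k), ⟨ht, mem_univ k⟩, hk⟩ continuous_fst.continuousOn
  have hafter : ∀ t ∈ Ioc τ T, ∀ k, 0 < q t k := fun t ht k => by
    by_contra! hle
    exact ht.1.not_ge (hmax (a := (t, k)) ⟨⟨⟨hτ.1.trans ht.1.le, ht.2⟩, mem_univ k⟩, hle⟩)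
  have hnonneg : ∀ k, 0 ≤ q τ k := fun k => ge_of_forall_Ioc_ge
    (fun t ht => (hq' t ht k).continuousWithinAt) hτ (hT k).le fun t ht => (hafter t ht k).le
  have hzero : q τ κ = 0 := le_antisymm hle (hnonneg κ)
  have hτT : τ < T := hτ.2.lt_of_ne fun h => (hT κ).ne' (h ▸ hzero)
  have hright : HasDerivWithinAt (q · κ) (q' τ κ) (Ici τ) τ :=
    (hq' τ hτ κ).mono_of_mem_nhdsWithin <| mem_of_superset (Icc_mem_nhdsGE hτT)
      (Icc_subset_Icc_left hτ.1)
  refine (hneg τ hτ κ hnonneg hzero).not_ge ?_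
  refine ge_of_tendsto ((hasDerivWithinAt_iff_tendsto_slope' self_notMem_Ioi).1
    hright.Ioi_of_Ici) ?_
  filter_upwards [Ioc_mem_nhdsGT hτT] with t ht
  rw [slope_def_field, hzero, sub_zero]
  exact div_nonneg (hafter t ht κ).le (sub_nonneg.2 ht.1.le)

section LoewnerOrder

variable {n : Type*} {M : Matrix n n ℝ}

lemma isSymm_of_nonneg (hM : 0 ≤ M) : M.IsSymm :=
  isHermitian_iff_isSymm.1 (nonneg_iff_posSemidef.1 hM).isHermitian

lemma posDef_of_smul_one_le [DecidableEq n] {r : ℝ} (hr : 0 < r) (h : r • 1 ≤ M) : M.PosDef := by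
  simpa only [add_sub_cancel] using (PosDef.one.smul hr).add_posSemidef (le_iff.1 h)

end LoewnerOrder

section MatrixCalculus

variable {l m n : Type*} [Fintype l] [Fintype m] [Fintype n]

section Smoothness

variable [DecidableEq m] [DecidableEq n]
  {E : Type*} [NormedAddCommGroup E] [NormedSpace ℝ E] {k : WithTop ℕ∞}

lemma contDiff_matrixMul {f : E → Matrix l m ℝ} {g : E → Matrix m n ℝ} (hf : ContDiff ℝ k f)
    (hg : ContDiff ℝ k g) : ContDiff ℝ k fun x => f x * g x :=
  have hmul : IsBoundedBilinearMap ℝ fun p : Matrix l m ℝ × Matrix m n ℝ => p.1 * p.2 :=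
    { add_left := Matrix.add_mul
      smul_left := smul_mul
      add_right := Matrix.mul_add
      smul_right := fun c M N => Matrix.mul_smul M c N
      bound := ⟨1, one_pos, fun M N => by simpa using l2_opNorm_mul M N⟩ }
  hmul.contDiff.comp (hf.prodMk hg)

lemma contDiff_matrixTranspose {f : E → Matrix m n ℝ} (hf : ContDiff ℝ k f) :
    ContDiff ℝ k fun x => (f x)ᵀ :=
  (LinearMap.toContinuousLinearMap (transposeLinearEquiv m n ℝ ℝ).toLinearMap).contDiff.comp hf

end Smoothness

variable {M : Matrix n n ℝ}

lemma dotProduct_mulVec_smul_normalize (M : Matrix n n ℝ) (x : n → ℝ) :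
    x ⬝ᵥ M *ᵥ x = ‖x‖ ^ 2 * ((‖x‖⁻¹ • x) ⬝ᵥ M *ᵥ (‖x‖⁻¹ • x)) := by
  rcases eq_or_ne x 0 with rfl | hx
  · simp only [zero_dotProduct, norm_zero, smul_zero, mul_zero]
  · have := norm_ne_zero_iff.2 hx
    simp only [mulVec_smul, dotProduct_smul, smul_dotProduct, smul_eq_mul]
    field_simp

lemma posSemidef_of_forall_mem_sphere (hM : M.IsSymm)
    (h : ∀ x ∈ sphere (0 : n → ℝ) 1, 0 ≤ x ⬝ᵥ M *ᵥ x) : M.PosSemidef := by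
  refine .of_dotProduct_mulVec_nonneg (isHermitian_iff_isSymm.2 hM) fun x => ?_
  rcases eq_or_ne x 0 with rfl | hx
  · rw [mulVec_zero, dotProduct_zero]
  · rw [star_trivial, dotProduct_mulVec_smul_normalize]
    exact mul_nonneg (sq_nonneg _) (h _ (by simpa using norm_smul_inv_norm (𝕜 := ℝ) hx))

lemma posDef_of_forall_mem_sphere (hM : M.IsSymm)
    (h : ∀ x ∈ sphere (0 : n → ℝ) 1, 0 < x ⬝ᵥ M *ᵥ x) : M.PosDef := by
  refine .of_dotProduct_mulVec_pos (isHermitian_iff_isSymm.2 hM) fun x hx => ?_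
  have : 0 < ‖x‖ := norm_pos_iff.2 hx
  rw [star_trivial, dotProduct_mulVec_smul_normalize]
  exact mul_pos (by positivity) (h _ (by simpa using norm_smul_inv_norm (𝕜 := ℝ) hx))

lemma hasDerivWithinAt_dotProduct_mulVec {X : ℝ → Matrix n n ℝ} {X' : Matrix n n ℝ} {s : Set ℝ}
    {t : ℝ} (hX : HasDerivWithinAt X X' s t) (x : n → ℝ) :
    HasDerivWithinAt (fun u => x ⬝ᵥ X u *ᵥ x) (x ⬝ᵥ X' *ᵥ x) s t := by
  classical
  let φ : Matrix n n ℝ →ₗ[ℝ] ℝ := dotProductBilin ℝ ℝ x ∘ₗ (mulVecBilin ℝ ℝ).flip x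
  exact (LinearMap.toContinuousLinearMap φ).hasFDerivAt.comp_hasDerivWithinAt t hX

variable [DecidableEq n]

lemma le_smul_one_of_norm_le (hM : M.IsSymm) {r : ℝ} (hr : ‖M‖ ≤ r) : M ≤ r • 1 := by
  have hself : IsSelfAdjoint M := isHermitian_iff_isSymm.2 hM
  rw [← Algebra.algebraMap_eq_smul_one, le_algebraMap_iff_spectrum_le hself]
  exact fun x hx => (le_abs_self x).trans <|
    (IsometricContinuousFunctionalCalculus.norm_spectrum_le M hx hself).trans hr

lemma norm_le_of_nonneg_of_le_smul_one (hM : 0 ≤ M) {r : ℝ} (hr : 0 ≤ r) (hMr : M ≤ r • 1) :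
    ‖M‖ ≤ r := by
  rw [← Algebra.algebraMap_eq_smul_one, le_algebraMap_iff_spectrum_le] at hMr
  rw [← cfc_id ℝ M]
  refine norm_cfc_le hr fun x hx => ?_
  rw [id, Real.norm_of_nonneg (spectrum_nonneg_of_nonneg hM hx)]
  exact hMr x hx

end MatrixCalculus

section LoewnerBounds

variable {n : Type*} [Finite n] [DecidableEq n]

lemma nonneg_of_forall_pos_add_smul_one_nonneg {M : Matrix n n ℝ}
    (h : ∀ ε : ℝ, 0 < ε → 0 ≤ M + ε • 1) : 0 ≤ M := by
  have := Fintype.ofFinite n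
  have hpsd : ∀ ε : ℝ, 0 < ε → (M + ε • 1).PosSemidef := fun ε hε =>
    nonneg_iff_posSemidef.1 (h ε hε)
  have hM : M.IsHermitian := by
    simpa using (hpsd 1 one_pos).isHermitian.sub (isHermitian_one (α := ℝ))
  refine nonneg_iff_posSemidef.2 (.of_dotProduct_mulVec_nonneg hM fun x => ?_)
  have hlim : Tendsto (fun ε : ℝ => star x ⬝ᵥ (M + ε • (1 : Matrix n n ℝ)) *ᵥ x) (𝓝[>] 0)
      (𝓝 (star x ⬝ᵥ M *ᵥ x)) := by
    have : Continuous fun ε : ℝ => star x ⬝ᵥ (M + ε • (1 : Matrix n n ℝ)) *ᵥ x := by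
      simp only [add_mulVec, smul_mulVec, one_mulVec]
      fun_prop
    simpa using this.continuousWithinAt.tendsto (x := (0 : ℝ)) (s := Ioi 0)
  exact ge_of_tendsto hlim <| eventually_nhdsWithin_of_forall fun ε hε =>
    (hpsd ε hε).dotProduct_mulVec_nonneg x

lemma exists_le_smul_one {ι T : Type*} [Finite ι] [TopologicalSpace T] {K : Set T}
    (hK : IsCompact K) {F : T → ι → Matrix n n ℝ} (hF : ContinuousOn F K)
    (hsymm : ∀ t ∈ K, ∀ ℓ, (F t ℓ).IsSymm) : ∃ c : ℝ, 0 ≤ c ∧ ∀ t ∈ K, F t ≤ c • 1 := by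
  have := Fintype.ofFinite n
  have := Fintype.ofFinite ι
  obtain ⟨c, hc⟩ := hK.exists_bound_of_continuousOn hF
  refine ⟨max c 0, le_max_right _ _, fun t ht ℓ => le_smul_one_of_norm_le (hsymm t ht ℓ) ?_⟩
  exact (norm_le_pi_norm (F t) ℓ).trans ((hc t ht).trans (le_max_left _ _))

end LoewnerBounds

section Lyapunov

variable {ι n : Type*} [Fintype ι] [Fintype n]

/-- The coupled Lyapunov operator `X ↦ (C_ℓᵀ X_ℓ + X_ℓ C_ℓ + ∑_j P_{ℓj} X_j)_ℓ`: the linear part of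
the coupled Riccati system. -/
def lyapunovOperator (P : ι → ι → ℝ) (C : ι → Matrix n n ℝ) :
    (ι → Matrix n n ℝ) →ₗ[ℝ] (ι → Matrix n n ℝ) where
  toFun X ℓ := (C ℓ)ᵀ * X ℓ + X ℓ * C ℓ + ∑ j, P ℓ j • X j
  map_add' X Y := by
    ext1 ℓ
    simp only [Pi.add_apply, Matrix.mul_add, Matrix.add_mul, smul_add, Finset.sum_add_distrib]
    abel
  map_smul' c X := by
    ext1 ℓ
    simp only [Pi.smul_apply, RingHom.id_apply, Matrix.mul_smul, Matrix.smul_mul, smul_add,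
      Finset.smul_sum, smul_comm c]

/-- The vector field of the coupled Lyapunov equation `X' + lyapunovOperator P C X + Q = 0`. -/
def lyapunovField (P : ι → ι → ℝ) (C Q : ℝ → ι → Matrix n n ℝ) (t : ℝ) (X : ι → Matrix n n ℝ) :
    ι → Matrix n n ℝ :=
  -(lyapunovOperator P (C t) X + Q t)

variable {P : ι → ι → ℝ}

lemma lyapunovOperator_apply (C X : ι → Matrix n n ℝ) (ℓ : ι) :
    lyapunovOperator P C X ℓ = (C ℓ)ᵀ * X ℓ + X ℓ * C ℓ + ∑ j, P ℓ j • X j := rfl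

lemma transpose_lyapunovOperator_apply (C X : ι → Matrix n n ℝ) (ℓ : ι) :
    (lyapunovOperator P C X ℓ)ᵀ = lyapunovOperator P C (fun j => (X j)ᵀ) ℓ := by
  simp only [lyapunovOperator_apply, transpose_add, transpose_mul, transpose_transpose,
    transpose_sum, transpose_smul]
  rw [add_comm ((X ℓ)ᵀ * C ℓ)]

lemma dotProduct_lyapunovOperator_mulVec_nonneg (hP : ∀ ℓ j, ℓ ≠ j → 0 ≤ P ℓ j)
    (C : ι → Matrix n n ℝ) {X : ι → Matrix n n ℝ} (hX : ∀ ℓ, (X ℓ).PosSemidef) {ℓ : ι} {x : n → ℝ}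
    (hx : x ⬝ᵥ X ℓ *ᵥ x = 0) : 0 ≤ x ⬝ᵥ lyapunovOperator P C X ℓ *ᵥ x := by
  have hker : X ℓ *ᵥ x = 0 := ((hX ℓ).dotProduct_mulVec_zero_iff x).1 hx
  have hker' : x ᵥ* X ℓ = 0 := by
    rw [← mulVec_transpose, (isHermitian_iff_isSymm.1 (hX ℓ).isHermitian).eq, hker]
  have hsum : 0 ≤ ∑ j, P ℓ j * (x ⬝ᵥ X j *ᵥ x) := Finset.sum_nonneg fun j _ => by
    by_cases hj : ℓ = j
    · rw [← hj, hx, mul_zero]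
    · exact mul_nonneg (hP ℓ j hj) ((hX j).dotProduct_mulVec_nonneg x)
  simpa only [lyapunovOperator_apply, add_mulVec, sum_mulVec, smul_mulVec, dotProduct_add,
    dotProduct_sum, dotProduct_smul, smul_eq_mul, ← mulVec_mulVec, hker, mulVec_zero,
    dotProduct_zero, dotProduct_mulVec x (X ℓ), hker', zero_dotProduct, zero_add] using hsum

variable [DecidableEq n] {C Q Q' X Y : ℝ → ι → Matrix n n ℝ} {s b : ℝ} {I : Set ℝ}

lemma contDiff_lyapunovOperator (P : ι → ι → ℝ) {E : Type*} [NormedAddCommGroup E]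
    [NormedSpace ℝ E] {k : WithTop ℕ∞} {C X : E → ι → Matrix n n ℝ} (hC : ContDiff ℝ k C)
    (hX : ContDiff ℝ k X) : ContDiff ℝ k fun p => lyapunovOperator P (C p) (X p) := by
  have hCℓ : ∀ ℓ, ContDiff ℝ k fun p => C p ℓ := contDiff_pi.1 hC
  have hXℓ : ∀ ℓ, ContDiff ℝ k fun p => X p ℓ := contDiff_pi.1 hX
  exact contDiff_pi.2 fun ℓ =>
    ((contDiff_matrixMul (contDiff_matrixTranspose (hCℓ ℓ)) (hXℓ ℓ)).add
      (contDiff_matrixMul (hXℓ ℓ) (hCℓ ℓ))).add (ContDiff.sum fun j _ => (hXℓ j).const_smul _)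

lemma isIntegralCurveOn_lyapunovField_add (hX : IsIntegralCurveOn X (lyapunovField P C Q) I)
    (hY : IsIntegralCurveOn Y (lyapunovField P C Q') I) :
    IsIntegralCurveOn (X + Y) (lyapunovField P C (Q + Q')) I := fun t ht =>
  ((hX t ht).add (hY t ht)).congr_deriv <| by
    simp only [lyapunovField, Pi.add_apply, map_add]
    abel

lemma isIntegralCurveOn_lyapunovField_sub (hX : IsIntegralCurveOn X (lyapunovField P C Q) I)
    (hY : IsIntegralCurveOn Y (lyapunovField P C Q') I) :
    IsIntegralCurveOn (X - Y) (lyapunovField P C (Q - Q')) I := fun t ht =>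
  ((hX t ht).sub (hY t ht)).congr_deriv <| by
    simp only [lyapunovField, Pi.sub_apply, map_sub]
    abel

lemma isIntegralCurveOn_lyapunovField_exp (P : ι → ι → ℝ) (C : ℝ → ι → Matrix n n ℝ)
    (β c b : ℝ) (I : Set ℝ) :
    IsIntegralCurveOn (fun t => (β * Real.exp (c * (b - t))) • (1 : ι → Matrix n n ℝ))
      (lyapunovField P C fun t =>
        (β * Real.exp (c * (b - t))) • (c • 1 - lyapunovOperator P (C t) 1))
      I := fun t _ => by
  have hexp : HasDerivAt (fun t => β * Real.exp (c * (b - t)))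
      (β * (Real.exp (c * (b - t)) * (c * -1))) t :=
    ((((hasDerivAt_id t).const_sub b).const_mul c).exp).const_mul β
  refine (hexp.smul_const (1 : ι → Matrix n n ℝ)).hasDerivWithinAt.congr_deriv ?_
  rw [lyapunovField, map_smul]
  module

lemma exists_smul_one_sub_lyapunovOperator_one_ge (P : ι → ι → ℝ)
    (hC : ContinuousOn C (Icc s b)) :
    ∃ c : ℝ, 0 ≤ c ∧ ∀ t ∈ Icc s b, 1 ≤ c • 1 - lyapunovOperator P (C t) 1 := by
  have hcont : ContinuousOn (fun t => lyapunovOperator P (C t) 1 + 1) (Icc s b) :=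
    ((contDiff_lyapunovOperator P (k := 0) contDiff_fst contDiff_snd).continuous.comp_continuousOn
      (hC.prodMk continuousOn_const)).add continuousOn_const
  obtain ⟨c, hc0, hc⟩ := exists_le_smul_one isCompact_Icc hcont fun t _ ℓ => by
    rw [Pi.add_apply, IsSymm, transpose_add, transpose_lyapunovOperator_apply]
    simp only [Pi.one_apply, transpose_one]
    rfl
  exact ⟨c, hc0, fun t ht => le_sub_iff_add_le'.2 (hc t ht)⟩

lemma isSymm_of_isIntegralCurveOn_lyapunovField (hC : ContinuousOn C (Icc s b))
    (hX : IsIntegralCurveOn X (lyapunovField P C Q) (Icc s b))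
    (hQ : ∀ t ∈ Icc s b, ∀ ℓ, (Q t ℓ).IsSymm) (hb : ∀ ℓ, (X b ℓ).IsSymm) :
    ∀ t ∈ Icc s b, ∀ ℓ, (X t ℓ).IsSymm := by
  have hXT : IsIntegralCurveOn (fun t ℓ => (X t ℓ)ᵀ) (lyapunovField P C Q) (Icc s b) := by
    refine fun t ht => hasDerivWithinAt_pi.2 fun ℓ => ?_
    have hder := (transposeLinearEquiv n n ℝ ℝ).toLinearMap.toContinuousLinearMap.hasFDerivAt
      |>.comp_hasDerivWithinAt t (hasDerivWithinAt_pi.1 (hX t ht) ℓ)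
    refine hder.congr_deriv ?_
    change (-(lyapunovOperator P (C t) (X t) ℓ + Q t ℓ))ᵀ = _
    rw [transpose_neg, transpose_add, transpose_lyapunovOperator_apply, (hQ t ht ℓ).eq]
    rfl
  have hlip : ∀ r, ∃ K, ∀ t ∈ Icc s b,
      LipschitzOnWith K (lyapunovField P C Q t) (closedBall 0 r) := fun r => by
    obtain ⟨K, hK⟩ := exists_lipschitzOnWith_closedBall_comp
      (contDiff_lyapunovOperator P contDiff_fst contDiff_snd) isCompact_Icc hC r
    refine ⟨K, fun t ht x hx y hy => ?_⟩
    rw [lyapunovField, lyapunovField, edist_neg_neg, edist_add_right]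
    exact hK t ht hx hy
  have heq := integralCurve_eqOn_Icc_of_eq_right hlip hXT hX (funext hb)
  exact fun t ht ℓ => congrFun (heq ht) ℓ

theorem posDef_of_isIntegralCurveOn_lyapunovField (hP : ∀ ℓ j, ℓ ≠ j → 0 ≤ P ℓ j)
    (hX : IsIntegralCurveOn X (lyapunovField P C Q) (Icc s b))
    (hsymm : ∀ t ∈ Icc s b, ∀ ℓ, (X t ℓ).IsSymm)
    (hQ : ∀ t ∈ Icc s b, ∀ ℓ, (Q t ℓ).PosDef) (hb : ∀ ℓ, (X b ℓ).PosDef) :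
    ∀ t ∈ Icc s b, ∀ ℓ, (X t ℓ).PosDef := by
  let : TopologicalSpace ι := ⊥
  have : DiscreteTopology ι := ⟨rfl⟩
  let q : ℝ → ι × sphere (0 : n → ℝ) 1 → ℝ := fun t k => k.2 ⬝ᵥ X t k.1 *ᵥ k.2
  let q' : ℝ → ι × sphere (0 : n → ℝ) 1 → ℝ := fun t k =>
    k.2 ⬝ᵥ lyapunovField P C Q t (X t) k.1 *ᵥ k.2
  have hne : ∀ k : ι × sphere (0 : n → ℝ) 1, (k.2 : n → ℝ) ≠ 0 := fun k =>
    ne_zero_of_mem_unit_sphere k.2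
  have hcont : ContinuousOn (Function.uncurry q) (Icc s b ×ˢ univ) := by
    have heval : Continuous fun p : (ι → Matrix n n ℝ) × ι => p.1 p.2 :=
      continuous_prod_of_discrete_right.2 continuous_apply
    have hXfst : ContinuousOn (fun p : ℝ × ι × sphere (0 : n → ℝ) 1 => X p.1) (Icc s b ×ˢ univ) :=
      hX.continuousOn.comp continuousOn_fst fun p hp => hp.1
    have hentry := heval.comp_continuousOn (hXfst.prodMk continuousOn_snd.fst)
    have hquad : Continuous fun p : Matrix n n ℝ × (n → ℝ) => p.2 ⬝ᵥ p.1 *ᵥ p.2 :=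
      continuous_snd.dotProduct (continuous_fst.matrix_mulVec continuous_snd)
    exact hquad.comp_continuousOn <|
      hentry.prodMk (continuous_subtype_val.comp_continuousOn continuousOn_snd.snd)
  have hpos : ∀ t ∈ Icc s b, ∀ k, 0 < q t k := by
    refine forall_pos_of_deriv_neg_at_zero (q' := q') hcont (fun t ht k =>
      hasDerivWithinAt_dotProduct_mulVec (hasDerivWithinAt_pi.1 (hX t ht) k.1) k.2)
      (fun k => (hb k.1).dotProduct_mulVec_pos (hne k)) fun t ht k hnonneg hzero => ?_
    have hpsd : ∀ ℓ, (X t ℓ).PosSemidef := fun ℓ =>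
      posSemidef_of_forall_mem_sphere (hsymm t ht ℓ) fun x hx => hnonneg (ℓ, ⟨x, hx⟩)
    have hlyap : 0 ≤ k.2 ⬝ᵥ lyapunovOperator P (C t) (X t) k.1 *ᵥ k.2 :=
      dotProduct_lyapunovOperator_mulVec_nonneg hP (C t) hpsd hzero
    have hforcing : 0 < k.2 ⬝ᵥ Q t k.1 *ᵥ k.2 := (hQ t ht k.1).dotProduct_mulVec_pos (hne k)
    simp only [q', lyapunovField, Pi.neg_apply, Pi.add_apply, neg_mulVec, add_mulVec,
      dotProduct_neg, dotProduct_add]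
    linarith
  exact fun t ht ℓ => posDef_of_forall_mem_sphere (hsymm t ht ℓ) fun x hx => hpos t ht (ℓ, ⟨x, hx⟩)

theorem nonneg_of_isIntegralCurveOn_lyapunovField (hP : ∀ ℓ j, ℓ ≠ j → 0 ≤ P ℓ j)
    (hC : ContinuousOn C (Icc s b)) (hX : IsIntegralCurveOn X (lyapunovField P C Q) (Icc s b))
    (hQ : ∀ t ∈ Icc s b, 0 ≤ Q t) (hb : 0 ≤ X b) : ∀ t ∈ Icc s b, 0 ≤ X t := by
  have hQsymm : ∀ t ∈ Icc s b, ∀ ℓ, (Q t ℓ).IsSymm := fun t ht ℓ => isSymm_of_nonneg (hQ t ht ℓ)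
  have hsymm : ∀ t ∈ Icc s b, ∀ ℓ, (X t ℓ).IsSymm :=
    isSymm_of_isIntegralCurveOn_lyapunovField hC hX hQsymm fun ℓ => isSymm_of_nonneg (hb ℓ)
  obtain ⟨c, -, hc⟩ := exists_smul_one_sub_lyapunovOperator_one_ge P hC
  intro t ht ℓ
  refine nonneg_of_forall_pos_add_smul_one_nonneg fun ε hε => ?_
  set β := ε / Real.exp (c * (b - t))
  have : 0 < β := by positivity
  have hY := isIntegralCurveOn_lyapunovField_add hX
    (isIntegralCurveOn_lyapunovField_exp P C β c b (Icc s b))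
  have hforcing : ∀ u ∈ Icc s b, ∀ k, (β * Real.exp (c * (b - u))) • 1 ≤
      Q u k + (β * Real.exp (c * (b - u))) • (c • 1 - lyapunovOperator P (C u) 1) k :=
    fun u hu k => le_add_of_nonneg_of_le (hQ u hu k)
      (smul_le_smul_of_nonneg_left (hc u hu k) (by positivity))
  have hterminal : ∀ k, (β * Real.exp (c * (b - b))) • 1 ≤
      X b k + (β * Real.exp (c * (b - b))) • 1 := fun k => le_add_of_nonneg_left (hb k)
  have hpos := posDef_of_isIntegralCurveOn_lyapunovField hP hY
    (fun u hu k => (hsymm u hu k).add (isSymm_one.smul (β * Real.exp (c * (b - u)))))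
    (fun u hu k => posDef_of_smul_one_le (by positivity) (hforcing u hu k))
    (fun k => posDef_of_smul_one_le (by positivity) (hterminal k)) t ht ℓ
  have hεt : β * Real.exp (c * (b - t)) = ε := div_mul_cancel₀ _ (Real.exp_ne_zero _)
  simpa [hεt] using nonneg_iff_posSemidef.2 hpos.posSemidef

end Lyapunov

section Riccati

lemma isSymm_of_nonneg_sub_transpose_mul_mul {m n : Type*} [Fintype m] [Finite n]
    {H : Matrix n n ℝ} {G : Matrix m n ℝ}
    {W : Matrix m m ℝ} (hW : 0 ≤ W) (hHG : 0 ≤ H - Gᵀ * W * G) : H.IsSymm := by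
  have := Fintype.ofFinite n
  have hG : (Gᵀ * W * G).IsSymm := isSymm_of_nonneg <| nonneg_iff_posSemidef.2 <|
    (nonneg_iff_posSemidef.1 hW).conjTranspose_mul_mul_same G
  simpa using (isSymm_of_nonneg hHG).add hG

variable {ι n m : Type*} [Fintype n] [Fintype m]

/-- The nonlinear part `H_ℓ - (B_ℓᵀ X_ℓ + G_ℓ)ᵀ W_ℓ (B_ℓᵀ X_ℓ + G_ℓ)` of the coupled Riccati system,
in which `W_ℓ` stands for `R_ℓ⁻¹`. -/
def riccatiForcing (B : ι → Matrix n m ℝ) (H : ι → Matrix n n ℝ) (G : ι → Matrix m n ℝ)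
    (W : ι → Matrix m m ℝ) (X : ι → Matrix n n ℝ) (ℓ : ι) : Matrix n n ℝ :=
  H ℓ - ((B ℓ)ᵀ * X ℓ + G ℓ)ᵀ * W ℓ * ((B ℓ)ᵀ * X ℓ + G ℓ)

/-- The vector field of the coupled Riccati equation
`X' + lyapunovOperator P A X + riccatiForcing B H G W X = 0`. -/
def riccatiField [Fintype ι] (P : ι → ι → ℝ) (A : ℝ → ι → Matrix n n ℝ)
    (B : ℝ → ι → Matrix n m ℝ) (H : ℝ → ι → Matrix n n ℝ) (G : ℝ → ι → Matrix m n ℝ)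
    (W : ℝ → ι → Matrix m m ℝ) (t : ℝ) (X : ι → Matrix n n ℝ) : ι → Matrix n n ℝ :=
  -(lyapunovOperator P (A t) X + riccatiForcing (B t) (H t) (G t) (W t) X)

/-- The state matrices `A_ℓ - B_ℓ W_ℓ (B_ℓᵀ X_ℓ + G_ℓ)` of the system closed by the feedback built
from `X`. -/
def closedLoop (A : ι → Matrix n n ℝ) (B : ι → Matrix n m ℝ) (G : ι → Matrix m n ℝ)
    (W : ι → Matrix m m ℝ) (X : ι → Matrix n n ℝ) (ℓ : ι) : Matrix n n ℝ :=
  A ℓ - B ℓ * W ℓ * ((B ℓ)ᵀ * X ℓ + G ℓ)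

lemma isSymm_riccatiForcing {B : ι → Matrix n m ℝ} {H : ι → Matrix n n ℝ} {G : ι → Matrix m n ℝ}
    {W : ι → Matrix m m ℝ} (X : ι → Matrix n n ℝ) {ℓ : ι} (hH : (H ℓ).IsSymm) (hW : (W ℓ).IsSymm) :
    (riccatiForcing B H G W X ℓ).IsSymm := by
  rw [riccatiForcing, IsSymm, transpose_sub, transpose_mul, transpose_mul, transpose_transpose,
    hH.eq, hW.eq, Matrix.mul_assoc]

lemma riccatiForcing_le {B : ι → Matrix n m ℝ} {H : ι → Matrix n n ℝ} {G : ι → Matrix m n ℝ}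
    {W : ι → Matrix m m ℝ} (X : ι → Matrix n n ℝ) (hW : 0 ≤ W) :
    riccatiForcing B H G W X ≤ H := fun ℓ =>
  sub_le_self _ <| nonneg_iff_posSemidef.2 <|
    (nonneg_iff_posSemidef.1 (hW ℓ)).conjTranspose_mul_mul_same _

lemma continuous_closedLoop {T : Type*} [TopologicalSpace T] {A : T → ι → Matrix n n ℝ}
    {B : T → ι → Matrix n m ℝ} {G : T → ι → Matrix m n ℝ} {W : T → ι → Matrix m m ℝ}
    {X : T → ι → Matrix n n ℝ} (hA : Continuous A) (hB : Continuous B) (hG : Continuous G)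
    (hW : Continuous W) (hX : Continuous X) :
    Continuous fun t => closedLoop (A t) (B t) (G t) (W t) (X t) := by
  refine continuous_pi fun ℓ => ?_
  have hBℓ : Continuous fun t => B t ℓ := continuous_pi_iff.1 hB ℓ
  have hXℓ : Continuous fun t => X t ℓ := continuous_pi_iff.1 hX ℓ
  exact (continuous_pi_iff.1 hA ℓ).sub ((hBℓ.matrix_mul (continuous_pi_iff.1 hW ℓ)).matrix_mul
    ((hBℓ.matrix_transpose.matrix_mul hXℓ).add (continuous_pi_iff.1 hG ℓ)))

variable [Fintype ι]

-- Completing the square: the indefinite terms are absorbed by the closed-loop matrices.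
lemma lyapunovOperator_add_riccatiForcing_eq_closedLoop (P : ι → ι → ℝ) (A : ι → Matrix n n ℝ)
    (B : ι → Matrix n m ℝ) (H : ι → Matrix n n ℝ) (G : ι → Matrix m n ℝ) {W : ι → Matrix m m ℝ}
    {X : ι → Matrix n n ℝ} (hW : ∀ ℓ, (W ℓ).IsSymm) (hX : ∀ ℓ, (X ℓ).IsSymm) :
    lyapunovOperator P A X + riccatiForcing B H G W X =
      lyapunovOperator P (closedLoop A B G W X) X + fun ℓ =>
        (H ℓ - (G ℓ)ᵀ * W ℓ * G ℓ) + ((B ℓ)ᵀ * X ℓ)ᵀ * W ℓ * ((B ℓ)ᵀ * X ℓ) := by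
  funext ℓ
  simp only [Pi.add_apply, lyapunovOperator_apply, riccatiForcing, closedLoop, transpose_add,
    transpose_sub, transpose_mul, transpose_transpose, (hW ℓ).eq, (hX ℓ).eq, Matrix.add_mul,
    Matrix.mul_add, Matrix.sub_mul, Matrix.mul_sub, Matrix.mul_assoc]
  abel

variable [DecidableEq n] {P : ι → ι → ℝ} {A : ℝ → ι → Matrix n n ℝ}
  {B : ℝ → ι → Matrix n m ℝ} {H : ℝ → ι → Matrix n n ℝ} {G : ℝ → ι → Matrix m n ℝ}
  {W : ℝ → ι → Matrix m m ℝ} {X : ℝ → ι → Matrix n n ℝ} {s a b : ℝ}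

lemma isIntegralCurveOn_lyapunovField_of_riccatiField {I : Set ℝ}
    (hX : IsIntegralCurveOn X (riccatiField P A B H G W) I) :
    IsIntegralCurveOn X
      (lyapunovField P A fun t => riccatiForcing (B t) (H t) (G t) (W t) (X t)) I := fun t ht =>
  (hX t ht).congr_deriv rfl

lemma isSymm_of_isIntegralCurveOn_riccatiField (hA : ContinuousOn A (Icc s b))
    (hW : ∀ t ∈ Icc s b, ∀ ℓ, (W t ℓ).IsSymm) (hH : ∀ t ∈ Icc s b, ∀ ℓ, (H t ℓ).IsSymm)
    (hX : IsIntegralCurveOn X (riccatiField P A B H G W) (Icc s b)) (hb : ∀ ℓ, (X b ℓ).IsSymm) :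
    ∀ t ∈ Icc s b, ∀ ℓ, (X t ℓ).IsSymm :=
  isSymm_of_isIntegralCurveOn_lyapunovField hA (isIntegralCurveOn_lyapunovField_of_riccatiField hX)
    (fun t ht ℓ => isSymm_riccatiForcing (X t) (hH t ht ℓ) (hW t ht ℓ)) hb

theorem nonneg_of_isIntegralCurveOn_riccatiField (hP : ∀ ℓ j, ℓ ≠ j → 0 ≤ P ℓ j)
    (hA : ContinuousOn A (Icc s b)) (hB : ContinuousOn B (Icc s b)) (hG : ContinuousOn G (Icc s b))
    (hWc : ContinuousOn W (Icc s b)) (hW : ∀ t ∈ Icc s b, 0 ≤ W t)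
    (hHG : ∀ t ∈ Icc s b, ∀ ℓ, 0 ≤ H t ℓ - (G t ℓ)ᵀ * W t ℓ * G t ℓ)
    (hX : IsIntegralCurveOn X (riccatiField P A B H G W) (Icc s b)) (hb : 0 ≤ X b) :
    ∀ t ∈ Icc s b, 0 ≤ X t := by
  have hWsymm : ∀ t ∈ Icc s b, ∀ ℓ, (W t ℓ).IsSymm := fun t ht ℓ => isSymm_of_nonneg (hW t ht ℓ)
  have hHsymm : ∀ t ∈ Icc s b, ∀ ℓ, (H t ℓ).IsSymm := fun t ht ℓ =>
    isSymm_of_nonneg_sub_transpose_mul_mul (hW t ht ℓ) (hHG t ht ℓ)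
  have hXsymm : ∀ t ∈ Icc s b, ∀ ℓ, (X t ℓ).IsSymm := isSymm_of_isIntegralCurveOn_riccatiField
    hA hWsymm hHsymm hX fun ℓ => isSymm_of_nonneg (hb ℓ)
  have hclosedLoop : IsIntegralCurveOn X (lyapunovField P
      (fun t => closedLoop (A t) (B t) (G t) (W t) (X t)) fun t ℓ =>
        (H t ℓ - (G t ℓ)ᵀ * W t ℓ * G t ℓ) + ((B t ℓ)ᵀ * X t ℓ)ᵀ * W t ℓ * ((B t ℓ)ᵀ * X t ℓ))
      (Icc s b) := fun t ht => (hX t ht).congr_deriv <| congrArg Neg.neg <|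
    lyapunovOperator_add_riccatiForcing_eq_closedLoop P (A t) (B t) (H t) (G t) (hWsymm t ht)
      (hXsymm t ht)
  have hcont : ContinuousOn (fun t => closedLoop (A t) (B t) (G t) (W t) (X t)) (Icc s b) :=
    continuousOn_iff_continuous_domRestrict.2 <| continuous_closedLoop hA.domRestrict hB.domRestrict
      hG.domRestrict hWc.domRestrict hX.continuousOn.domRestrict
  refine nonneg_of_isIntegralCurveOn_lyapunovField hP hcont hclosedLoop (fun t ht ℓ => ?_) hb
  exact add_nonneg (hHG t ht ℓ) <| nonneg_iff_posSemidef.2 <|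
    (nonneg_iff_posSemidef.1 (hW t ht ℓ)).conjTranspose_mul_mul_same _

theorem le_smul_one_of_isIntegralCurveOn_riccatiField (hP : ∀ ℓ j, ℓ ≠ j → 0 ≤ P ℓ j)
    (hA : ContinuousOn A (Icc s b)) (hW : ∀ t ∈ Icc s b, 0 ≤ W t) {c β : ℝ} (hc0 : 0 ≤ c)
    (hc : ∀ t ∈ Icc s b, 1 ≤ c • 1 - lyapunovOperator P (A t) 1) (hβ0 : 0 ≤ β)
    (hβ : ∀ t ∈ Icc s b, H t ≤ β • 1)
    (hX : IsIntegralCurveOn X (riccatiField P A B H G W) (Icc s b)) (hb : X b ≤ β • 1) :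
    ∀ t ∈ Icc s b, X t ≤ (β * Real.exp (c * (b - t))) • 1 := by
  let e : ℝ → ℝ := fun t => β * Real.exp (c * (b - t))
  have hforcing : ∀ t ∈ Icc s b, riccatiForcing (B t) (H t) (G t) (W t) (X t) ≤
      e t • (c • 1 - lyapunovOperator P (A t) 1) := fun t ht => calc
    riccatiForcing (B t) (H t) (G t) (W t) (X t)
      ≤ H t := riccatiForcing_le (X t) (hW t ht)
    _ ≤ β • 1 := hβ t ht
    _ ≤ e t • 1 := by
        have hexp : 1 ≤ Real.exp (c * (b - t)) :=
          Real.one_le_exp (mul_nonneg hc0 (sub_nonneg.2 ht.2))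
        exact smul_le_smul_of_nonneg_right (le_mul_of_one_le_right hβ0 hexp) zero_le_one
    _ ≤ e t • (c • 1 - lyapunovOperator P (A t) 1) :=
        smul_le_smul_of_nonneg_left (hc t ht) (by positivity)
  have hterminal : X b ≤ e b • 1 := by simpa [e] using hb
  have hgap : IsIntegralCurveOn ((fun t => e t • (1 : ι → Matrix n n ℝ)) - X) (lyapunovField P A
      ((fun t => e t • (c • 1 - lyapunovOperator P (A t) 1)) -
        fun t => riccatiForcing (B t) (H t) (G t) (W t) (X t))) (Icc s b) :=
    isIntegralCurveOn_lyapunovField_sub (isIntegralCurveOn_lyapunovField_exp P A β c b _)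
      (isIntegralCurveOn_lyapunovField_of_riccatiField hX)
  exact fun t ht => sub_nonneg.1 <| nonneg_of_isIntegralCurveOn_lyapunovField hP hA hgap
    (fun t ht => sub_nonneg.2 (hforcing t ht)) (sub_nonneg.2 hterminal) t ht

theorem exists_forall_isIntegralCurveOn_riccatiField_le (hP : ∀ ℓ j, ℓ ≠ j → 0 ≤ P ℓ j)
    (hA : ContinuousOn A (Icc a b)) (hH : ContinuousOn H (Icc a b))
    (hHsymm : ∀ t ∈ Icc a b, ∀ ℓ, (H t ℓ).IsSymm) (hW : ∀ t ∈ Icc a b, 0 ≤ W t)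
    {S : ι → Matrix n n ℝ} (hS : ∀ ℓ, (S ℓ).IsSymm) :
    ∃ M : ℝ, 0 ≤ M ∧ ∀ s ∈ Icc a b, ∀ X : ℝ → ι → Matrix n n ℝ, X b = S →
      IsIntegralCurveOn X (riccatiField P A B H G W) (Icc s b) → X s ≤ M • 1 := by
  obtain ⟨c, hc0, hc⟩ := exists_smul_one_sub_lyapunovOperator_one_ge P hA
  obtain ⟨μ, hμ0, hμ⟩ := exists_le_smul_one isCompact_Icc hH hHsymm
  obtain ⟨ν, -, hν⟩ := exists_le_smul_one (isCompact_singleton (x := b)) (F := fun _ => S)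
    continuousOn_const fun _ _ => hS
  have hβ0 : 0 ≤ max μ ν := hμ0.trans (le_max_left _ _)
  refine ⟨max μ ν * Real.exp (c * (b - a)), by positivity, fun s hs X hXb hX => ?_⟩
  have hsub : Icc s b ⊆ Icc a b := Icc_subset_Icc_left hs.1
  have hHle : ∀ t ∈ Icc s b, H t ≤ max μ ν • 1 := fun t ht =>
    (hμ t (hsub ht)).trans (smul_le_smul_of_nonneg_right (le_max_left _ _) zero_le_one)
  have hSle : S ≤ max μ ν • 1 :=
    (hν b rfl).trans (smul_le_smul_of_nonneg_right (le_max_right _ _) zero_le_one)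
  have hexp : max μ ν * Real.exp (c * (b - s)) ≤ max μ ν * Real.exp (c * (b - a)) := by
    gcongr
    exact hs.1
  exact (le_smul_one_of_isIntegralCurveOn_riccatiField hP (hA.mono hsub)
    (fun t ht => hW t (hsub ht)) hc0 (fun t ht => hc t (hsub ht)) hβ0 hHle hX (hXb ▸ hSle) s
    (left_mem_Icc.2 hs.2)).trans (smul_le_smul_of_nonneg_right hexp zero_le_one)

section Smoothness

variable [DecidableEq m]

lemma contDiff_riccatiForcing {E : Type*} [NormedAddCommGroup E] [NormedSpace ℝ E]
    {k : WithTop ℕ∞} {B : E → ι → Matrix n m ℝ} {H : E → ι → Matrix n n ℝ}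
    {G : E → ι → Matrix m n ℝ} {W : E → ι → Matrix m m ℝ} {X : E → ι → Matrix n n ℝ}
    (hB : ContDiff ℝ k B) (hH : ContDiff ℝ k H) (hG : ContDiff ℝ k G) (hW : ContDiff ℝ k W)
    (hX : ContDiff ℝ k X) :
    ContDiff ℝ k fun p => riccatiForcing (B p) (H p) (G p) (W p) (X p) := by
  refine contDiff_pi.2 fun ℓ => ?_
  have hBℓ : ContDiff ℝ k fun p => B p ℓ := contDiff_pi.1 hB ℓ
  have hHℓ : ContDiff ℝ k fun p => H p ℓ := contDiff_pi.1 hH ℓ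
  have hGℓ : ContDiff ℝ k fun p => G p ℓ := contDiff_pi.1 hG ℓ
  have hWℓ : ContDiff ℝ k fun p => W p ℓ := contDiff_pi.1 hW ℓ
  have hXℓ : ContDiff ℝ k fun p => X p ℓ := contDiff_pi.1 hX ℓ
  have hK : ContDiff ℝ k fun p => (B p ℓ)ᵀ * X p ℓ + G p ℓ :=
    (contDiff_matrixMul (contDiff_matrixTranspose hBℓ) hXℓ).add hGℓ
  exact hHℓ.sub (contDiff_matrixMul (contDiff_matrixMul (contDiff_matrixTranspose hK) hWℓ) hK)

lemma contDiff_lyapunovOperator_add_riccatiForcing (P : ι → ι → ℝ) {k : WithTop ℕ∞} :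
    ContDiff ℝ k fun p : ((ι → Matrix n n ℝ) × (ι → Matrix n m ℝ) × (ι → Matrix n n ℝ) ×
      (ι → Matrix m n ℝ) × (ι → Matrix m m ℝ)) × (ι → Matrix n n ℝ) =>
        lyapunovOperator P p.1.1 p.2 +
          riccatiForcing p.1.2.1 p.1.2.2.1 p.1.2.2.2.1 p.1.2.2.2.2 p.2 :=
  (contDiff_lyapunovOperator P contDiff_fst.fst contDiff_snd).add <|
    contDiff_riccatiForcing contDiff_fst.snd.fst contDiff_fst.snd.snd.fst
      contDiff_fst.snd.snd.snd.fst contDiff_fst.snd.snd.snd.snd contDiff_snd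

end Smoothness

section Regularity

variable (P) (hA : ContinuousOn A (Icc a b)) (hB : ContinuousOn B (Icc a b))
  (hH : ContinuousOn H (Icc a b)) (hG : ContinuousOn G (Icc a b)) (hW : ContinuousOn W (Icc a b))
include hA hB hH hG hW

omit [DecidableEq n] in
lemma continuousOn_riccatiField {Y : ℝ → ι → Matrix n n ℝ} (hY : ContinuousOn Y (Icc a b)) :
    ContinuousOn (fun t => riccatiField P A B H G W t (Y t)) (Icc a b) := by
  classical
  exact ((contDiff_lyapunovOperator_add_riccatiForcing P (k := 0)).continuous.comp_continuousOn
    ((hA.prodMk (hB.prodMk (hH.prodMk (hG.prodMk hW)))).prodMk hY)).neg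

lemma exists_lipschitzOnWith_riccatiField (r : ℝ) :
    ∃ K, ∀ t ∈ Icc a b, LipschitzOnWith K (riccatiField P A B H G W t) (closedBall 0 r) := by
  classical
  obtain ⟨K, hK⟩ := exists_lipschitzOnWith_closedBall_comp
    (contDiff_lyapunovOperator_add_riccatiForcing P) isCompact_Icc
    (hA.prodMk (hB.prodMk (hH.prodMk (hG.prodMk hW)))) r
  refine ⟨K, fun t ht x hx y hy => ?_⟩
  rw [riccatiField, riccatiField, edist_neg_neg]
  exact hK t ht hx hy

end Regularity

omit [DecidableEq n] in
theorem exists_hasDerivAt_riccatiField (hab : a ≤ b) (hP : ∀ ℓ j, ℓ ≠ j → 0 ≤ P ℓ j)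
    (hA : ContinuousOn A (Icc a b)) (hB : ContinuousOn B (Icc a b)) (hH : ContinuousOn H (Icc a b))
    (hG : ContinuousOn G (Icc a b)) (hWc : ContinuousOn W (Icc a b)) (hW : ∀ t ∈ Icc a b, 0 ≤ W t)
    (hHG : ∀ t ∈ Icc a b, ∀ ℓ, 0 ≤ H t ℓ - (G t ℓ)ᵀ * W t ℓ * G t ℓ)
    {S : ι → Matrix n n ℝ} (hS : 0 ≤ S) :
    ∃ X : ℝ → ι → Matrix n n ℝ, X b = S ∧
      ∀ t ∈ Icc a b, HasDerivAt X (riccatiField P A B H G W t (X t)) t := by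
  classical
  have hHsymm : ∀ t ∈ Icc a b, ∀ ℓ, (H t ℓ).IsSymm := fun t ht ℓ =>
    isSymm_of_nonneg_sub_transpose_mul_mul (hW t ht ℓ) (hHG t ht ℓ)
  obtain ⟨M, hM0, hM⟩ := exists_forall_isIntegralCurveOn_riccatiField_le (B := B) (G := G) hP hA hH
    hHsymm hW fun ℓ => isSymm_of_nonneg (hS ℓ)
  refine exists_hasDerivAt_of_integralCurve_norm_le hab
    (exists_lipschitzOnWith_riccatiField P hA hB hH hG hWc)
    (fun _ => continuousOn_riccatiField P hA hB hH hG hWc continuousOn_const)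
    (M := M) fun s hs X hXb hX => ?_
  have hsub : Icc s b ⊆ Icc a b := Icc_subset_Icc_left hs.1
  have hX0 : 0 ≤ X s := nonneg_of_isIntegralCurveOn_riccatiField hP (hA.mono hsub) (hB.mono hsub)
    (hG.mono hsub) (hWc.mono hsub) (fun t ht => hW t (hsub ht)) (fun t ht => hHG t (hsub ht)) hX
    (hXb ▸ hS) s (left_mem_Icc.2 hs.2)
  exact (pi_norm_le_iff_of_nonneg hM0).2 fun ℓ =>
    norm_le_of_nonneg_of_le_smul_one (hX0 ℓ) hM0 (hM s hs X hXb hX ℓ)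

end Riccati

/-- `Λ` solves the coupled Riccati system on `[a, b]` with terminal values `S` at `b`: the analogue
of `CoupledRiccatiSol` for arbitrary finite index types, with `W` in place of the inverse of `R`. As
there, the derivatives are taken entrywise and are two-sided at `a` and `b`. -/
def IsRiccatiSolutionOn {ι n m : Type*} [Fintype ι] [Fintype n] [Fintype m] (P : ι → ι → ℝ)
    (A : ι → ℝ → Matrix n n ℝ) (B : ι → ℝ → Matrix n m ℝ) (H : ι → ℝ → Matrix n n ℝ)
    (G : ι → ℝ → Matrix m n ℝ) (W : ι → ℝ → Matrix m m ℝ) (a b : ℝ) (S : ι → Matrix n n ℝ)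
    (Λ : ι → ℝ → Matrix n n ℝ) : Prop :=
  (∀ ℓ, Λ ℓ b = S ℓ) ∧ ∀ ℓ, ∀ t ∈ Icc a b, ∀ i j, HasDerivAt (fun s => Λ ℓ s i j)
    (-(((A ℓ t)ᵀ * Λ ℓ t + Λ ℓ t * A ℓ t + H ℓ t
      - ((B ℓ t)ᵀ * Λ ℓ t + G ℓ t)ᵀ * W ℓ t * ((B ℓ t)ᵀ * Λ ℓ t + G ℓ t)
      + ∑ j', P ℓ j' • Λ j' t) i j)) t

lemma isRiccatiSolutionOn_iff {ι n m : Type*} [Fintype ι] [Fintype n] [Fintype m]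
    {P : ι → ι → ℝ} {A : ι → ℝ → Matrix n n ℝ} {B : ι → ℝ → Matrix n m ℝ}
    {H : ι → ℝ → Matrix n n ℝ} {G : ι → ℝ → Matrix m n ℝ} {W : ι → ℝ → Matrix m m ℝ} {a b : ℝ}
    {S : ι → Matrix n n ℝ} {Λ : ι → ℝ → Matrix n n ℝ} :
    IsRiccatiSolutionOn P A B H G W a b S Λ ↔
      (fun ℓ => Λ ℓ b) = S ∧ ∀ t ∈ Icc a b, HasDerivAt (fun s ℓ => Λ ℓ s)
        (riccatiField P (fun s ℓ => A ℓ s) (fun s ℓ => B ℓ s) (fun s ℓ => H ℓ s)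
          (fun s ℓ => G ℓ s) (fun s ℓ => W ℓ s) t fun ℓ => Λ ℓ t) t := by
  classical
  refine and_congr funext_iff.symm ?_
  rw [forall_comm]
  refine forall_congr' fun t => ?_
  rw [forall_comm]
  refine forall_congr' fun ht => ?_
  rw [hasDerivAt_pi]
  refine forall_congr' fun ℓ => ?_
  have hfield : (A ℓ t)ᵀ * Λ ℓ t + Λ ℓ t * A ℓ t + H ℓ t
      - ((B ℓ t)ᵀ * Λ ℓ t + G ℓ t)ᵀ * W ℓ t * ((B ℓ t)ᵀ * Λ ℓ t + G ℓ t)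
      + ∑ j, P ℓ j • Λ j t = lyapunovOperator P (fun ℓ => A ℓ t) (fun ℓ => Λ ℓ t) ℓ +
        riccatiForcing (fun ℓ => B ℓ t) (fun ℓ => H ℓ t) (fun ℓ => G ℓ t) (fun ℓ => W ℓ t)
          (fun ℓ => Λ ℓ t) ℓ := by
    rw [lyapunovOperator_apply, riccatiForcing]
    abel
  rw [hfield]
  exact (hasDerivAt_pi.trans <| forall_congr' fun i => hasDerivAt_pi).symm

lemma continuousOn_matrix {T m n : Type*} [TopologicalSpace T] {s : Set T}
    {F : T → Matrix m n ℝ} (hF : ∀ i j, ContinuousOn (fun t => F t i j) s) : ContinuousOn F s :=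
  continuousOn_pi.2 fun i => continuousOn_pi.2 (hF i)

lemma continuousOn_matrix_inv {T n : Type*} [TopologicalSpace T] [Fintype n] [DecidableEq n]
    {s : Set T} {R : T → Matrix n n ℝ} (hR : ContinuousOn R s) (hunit : ∀ t ∈ s, IsUnit (R t)) :
    ContinuousOn (fun t => (R t)⁻¹) s := fun t ht => by
  obtain ⟨u, hu⟩ := hunit t ht
  have hinv : ContinuousAt Ring.inverse (R t) := hu ▸ NormedRing.inverse_continuousAt u
  simpa only [nonsing_inv_eq_ringInverse, Function.comp_def] using
    hinv.comp_continuousWithinAt (hR t ht)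

theorem stmt11_general {ι n m : Type*} [Fintype ι] [Fintype n] [Fintype m] {a b : ℝ} (hab : a ≤ b)
    {P : ι → ι → ℝ} (hP : ∀ ℓ j, ℓ ≠ j → 0 ≤ P ℓ j) {A : ι → ℝ → Matrix n n ℝ}
    {B : ι → ℝ → Matrix n m ℝ} {H : ι → ℝ → Matrix n n ℝ} {G : ι → ℝ → Matrix m n ℝ}
    {W : ι → ℝ → Matrix m m ℝ} (hA : ∀ ℓ, ContinuousOn (A ℓ) (Icc a b))
    (hB : ∀ ℓ, ContinuousOn (B ℓ) (Icc a b)) (hH : ∀ ℓ, ContinuousOn (H ℓ) (Icc a b))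
    (hG : ∀ ℓ, ContinuousOn (G ℓ) (Icc a b)) (hWc : ∀ ℓ, ContinuousOn (W ℓ) (Icc a b))
    (hW : ∀ ℓ, ∀ t ∈ Icc a b, (W ℓ t).PosSemidef)
    (hHG : ∀ ℓ, ∀ t ∈ Icc a b, (H ℓ t - (G ℓ t)ᵀ * W ℓ t * G ℓ t).PosSemidef)
    {S : ι → Matrix n n ℝ} (hS : ∀ ℓ, (S ℓ).PosSemidef) :
    ∃ Λ, IsRiccatiSolutionOn P A B H G W a b S Λ ∧
      (∀ Λ', IsRiccatiSolutionOn P A B H G W a b S Λ' →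
        ∀ ℓ, ∀ t ∈ Icc a b, Λ' ℓ t = Λ ℓ t) ∧
      ∀ ℓ, ∀ t ∈ Icc a b, (Λ ℓ t).PosSemidef := by
  classical
  simp only [← nonneg_iff_posSemidef, isRiccatiSolutionOn_iff] at hW hHG hS ⊢
  replace hW : ∀ t ∈ Icc a b, 0 ≤ fun ℓ => W ℓ t := fun t ht ℓ => hW ℓ t ht
  replace hHG : ∀ t ∈ Icc a b, ∀ ℓ, 0 ≤ H ℓ t - (G ℓ t)ᵀ * W ℓ t * G ℓ t := fun t ht ℓ =>
    hHG ℓ t ht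
  replace hA : ContinuousOn (fun t ℓ => A ℓ t) (Icc a b) := continuousOn_pi.2 hA
  replace hB : ContinuousOn (fun t ℓ => B ℓ t) (Icc a b) := continuousOn_pi.2 hB
  replace hH : ContinuousOn (fun t ℓ => H ℓ t) (Icc a b) := continuousOn_pi.2 hH
  replace hG : ContinuousOn (fun t ℓ => G ℓ t) (Icc a b) := continuousOn_pi.2 hG
  replace hWc : ContinuousOn (fun t ℓ => W ℓ t) (Icc a b) := continuousOn_pi.2 hWc
  obtain ⟨X, hXb, hX⟩ := exists_hasDerivAt_riccatiField hab hP hA hB hH hG hWc hW hHG hS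
  have hcurve := fun t ht => (hX t ht).hasDerivWithinAt (s := Icc a b)
  refine ⟨fun ℓ t => X t ℓ, ⟨hXb, hX⟩, fun Λ' hΛ' ℓ t ht => ?_, fun ℓ t ht => ?_⟩
  · have heq := integralCurve_eqOn_Icc_of_eq_right
      (exists_lipschitzOnWith_riccatiField P hA hB hH hG hWc)
      (fun t ht => (hΛ'.2 t ht).hasDerivWithinAt) hcurve (hΛ'.1.trans hXb.symm)
    exact congrFun (heq ht) ℓ
  · exact nonneg_of_isIntegralCurveOn_riccatiField hP hA hB hG hWc hW hHG hcurve (hXb ▸ hS) t ht ℓ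

theorem stmt11 (D n m : ℕ) (hD : 0 < D) (hn : 0 < n) (hm : 0 < m)
    (T : ℝ) (hT : 0 < T) (δ : ℝ) (hδ : 0 < δ)
    (P : Fin D → Fin D → ℝ)
    (hPoff : ∀ ℓ j, ℓ ≠ j → 0 ≤ P ℓ j)
    (hPdiag : ∀ ℓ, P ℓ ℓ = -∑ j ∈ Finset.univ.erase ℓ, P ℓ j)
    (A : Fin D → ℝ → Matrix (Fin n) (Fin n) ℝ)
    (B : Fin D → ℝ → Matrix (Fin n) (Fin m) ℝ)
    (H : Fin D → ℝ → Matrix (Fin n) (Fin n) ℝ)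
    (G : Fin D → ℝ → Matrix (Fin m) (Fin n) ℝ)
    (R : Fin D → ℝ → Matrix (Fin m) (Fin m) ℝ)
    (hAcont : ∀ ℓ i j, ContinuousOn (fun t => A ℓ t i j) (Set.Icc (0 : ℝ) T))
    (hBcont : ∀ ℓ i j, ContinuousOn (fun t => B ℓ t i j) (Set.Icc (0 : ℝ) T))
    (hHcont : ∀ ℓ i j, ContinuousOn (fun t => H ℓ t i j) (Set.Icc (0 : ℝ) T))
    (hGcont : ∀ ℓ i j, ContinuousOn (fun t => G ℓ t i j) (Set.Icc (0 : ℝ) T))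
    (hRcont : ∀ ℓ i j, ContinuousOn (fun t => R ℓ t i j) (Set.Icc (0 : ℝ) T))
    (hAbd : ∃ K, ∀ ℓ, ∀ t ∈ Set.Icc (0 : ℝ) T, ∀ i j, |A ℓ t i j| ≤ K)
    (hBbd : ∃ K, ∀ ℓ, ∀ t ∈ Set.Icc (0 : ℝ) T, ∀ i j, |B ℓ t i j| ≤ K)
    (hHbd : ∃ K, ∀ ℓ, ∀ t ∈ Set.Icc (0 : ℝ) T, ∀ i j, |H ℓ t i j| ≤ K)
    (hGbd : ∃ K, ∀ ℓ, ∀ t ∈ Set.Icc (0 : ℝ) T, ∀ i j, |G ℓ t i j| ≤ K)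
    (hRbd : ∃ K, ∀ ℓ, ∀ t ∈ Set.Icc (0 : ℝ) T, ∀ i j, |R ℓ t i j| ≤ K)
    (hHsymm : ∀ ℓ, ∀ t ∈ Set.Icc (0 : ℝ) T, (H ℓ t).IsSymm)
    (hRsymm : ∀ ℓ, ∀ t ∈ Set.Icc (0 : ℝ) T, (R ℓ t).IsSymm)
    (hRpos : ∀ ℓ, ∀ t ∈ Set.Icc (0 : ℝ) T,
      (R ℓ t - δ • (1 : Matrix (Fin m) (Fin m) ℝ)).PosSemidef)
    (hHG : ∀ ℓ, ∀ t ∈ Set.Icc (0 : ℝ) T,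
      (H ℓ t - (G ℓ t)ᵀ * (R ℓ t)⁻¹ * G ℓ t).PosSemidef)
    (S : Fin D → Matrix (Fin n) (Fin n) ℝ)
    (hS : ∀ ℓ, (S ℓ).PosSemidef) :
    ∃ Λ : Fin D → ℝ → Matrix (Fin n) (Fin n) ℝ,
      CoupledRiccatiSol D n m T P A B H G R S Λ ∧
        (∀ Λ' : Fin D → ℝ → Matrix (Fin n) (Fin n) ℝ,
          CoupledRiccatiSol D n m T P A B H G R S Λ' →
            ∀ ℓ, ∀ t ∈ Set.Icc (0 : ℝ) T, Λ' ℓ t = Λ ℓ t) ∧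
        ∀ ℓ, ∀ t ∈ Set.Icc (0 : ℝ) T, (Λ ℓ t).PosSemidef := by
  have hRdef : ∀ ℓ, ∀ t ∈ Icc 0 T, (R ℓ t).PosDef := fun ℓ t ht =>
    posDef_of_smul_one_le hδ (hRpos ℓ t ht)
  exact stmt11_general hT.le hPoff (fun ℓ => continuousOn_matrix (hAcont ℓ))
    (fun ℓ => continuousOn_matrix (hBcont ℓ)) (fun ℓ => continuousOn_matrix (hHcont ℓ))
    (fun ℓ => continuousOn_matrix (hGcont ℓ))
    (fun ℓ => continuousOn_matrix_inv (continuousOn_matrix (hRcont ℓ)) fun t ht =>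
      (hRdef ℓ t ht).isUnit)
    (fun ℓ t ht => (hRdef ℓ t ht).posSemidef.inv) hHG hS
end
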